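/- arXiv:2108.11210 — 6 statements merged into one kernel-verified Lean document; each statement's English description precedes it below -/
import Mathlib

section
/- Let q ≥ 0, β ≥ 0 and η < 0. Then the series Σ_{n=1}^∞ (-1)^{n-1} e^{nη} ∫_0^∞ e^{-nx} x^q √(1+βx/2) dx converges, and F_q(η,β) = Σ_{n=1}^∞ (-1)^{n-1} e^{nη} ∫_0^∞ e^{-nx} x^q √(1+βx/2) dx. -/
/-!
For `x > 0 > η` the Fermi factor is a geometric series with ratio `-exp (η - x)`,
`1 / (exp (x - η) + 1) = exp (η - x) * ∑ (-exp (η - x)) ^ n`.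
The ratio is bounded by `exp η < 1` uniformly in `x`, so the series may be integrated term by term
against any `f` with `exp (-x) * f x` integrable.
-/

open Real MeasureTheory Set

/-- The relativistic Fermi-Dirac integral. -/
noncomputable def Frel (q η β : ℝ) : ℝ :=
  ∫ x in Ioi (0 : ℝ), x ^ q * Real.sqrt (1 + β * x / 2) / (Real.exp (x - η) + 1)

lemma hasSum_integral_pow_smul_of_norm_le {α 𝕜 E : Type*} [MeasurableSpace α] {μ : Measure α}
    [NormedField 𝕜] [NormedAddCommGroup E] [NormedSpace ℝ E] [NormedSpace 𝕜 E]
    {r : α → 𝕜} {g : α → E} {c : ℝ} (hc₀ : 0 ≤ c) (hc₁ : c < 1)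
    (hr : AEStronglyMeasurable r μ) (hrc : ∀ᵐ x ∂μ, ‖r x‖ ≤ c) (hg : Integrable g μ) :
    HasSum (fun n : ℕ ↦ ∫ x, r x ^ n • g x ∂μ) (∫ x, (1 - r x)⁻¹ • g x ∂μ) := by
  have hpow_le (n : ℕ) : ∀ᵐ x ∂μ, ‖r x ^ n‖ ≤ c ^ n := by
    filter_upwards [hrc] with x hx
    rw [norm_pow]
    gcongr
  have hint (n : ℕ) : Integrable (fun x ↦ r x ^ n • g x) μ :=
    hg.bdd_smul (c ^ n) (hr.pow n) (hpow_le n)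
  have hnorm_le (n : ℕ) : ∫ x, ‖r x ^ n • g x‖ ∂μ ≤ c ^ n * ∫ x, ‖g x‖ ∂μ := by
    rw [← integral_const_mul]
    refine integral_mono_ae (hint n).norm (hg.norm.const_mul _) ?_
    filter_upwards [hpow_le n] with x hx
    rw [norm_smul]
    gcongr
  have hsummable : Summable fun n : ℕ ↦ ∫ x, ‖r x ^ n • g x‖ ∂μ :=
    ((summable_geometric_of_lt_one hc₀ hc₁).mul_right _).of_nonneg_of_le
      (fun n ↦ integral_nonneg fun x ↦ norm_nonneg _) hnorm_le
  have htsum : ∫ x, ∑' n : ℕ, r x ^ n • g x ∂μ = ∫ x, (1 - r x)⁻¹ • g x ∂μ := by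
    refine integral_congr_ae ?_
    filter_upwards [hrc] with x hx
    exact ((hasSum_geometric_of_norm_lt_one (hx.trans_lt hc₁)).smul_const (g x)).tsum_eq
  exact htsum ▸ hasSum_integral_of_summable_integral_norm hint hsummable

lemma inv_one_sub_neg_exp_mul_exp (t : ℝ) :
    (1 - -exp (-t))⁻¹ * exp (-t) = (exp t + 1)⁻¹ := by
  rw [exp_neg, sub_neg_eq_add, ← mul_inv, add_mul, one_mul, inv_mul_cancel₀ (exp_ne_zero t)]

lemma neg_exp_pow_mul_exp (η x : ℝ) (n : ℕ) :
    (-exp (η - x)) ^ n * exp (η - x) =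
      (-1) ^ n * exp ((n + 1) * η) * exp (-(n + 1) * x) := by
  rw [neg_pow, ← exp_nat_mul, mul_assoc, mul_assoc, ← exp_add, ← exp_add]
  ring_nf

lemma hasSum_integral_inv_exp_sub_add_one_smul {E : Type*} [NormedAddCommGroup E]
    [NormedSpace ℝ E] {μ : Measure ℝ} {f : ℝ → E} {a η : ℝ} (hη : η < a)
    (ha : ∀ᵐ x ∂μ, a ≤ x) (hf : Integrable (fun x ↦ exp (-x) • f x) μ) :
    HasSum
      (fun n : ℕ ↦ ((-1) ^ n * exp ((n + 1) * η)) • ∫ x, exp (-(n + 1) * x) • f x ∂μ)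
      (∫ x, (exp (x - η) + 1)⁻¹ • f x ∂μ) := by
  have hratio : ∀ᵐ x ∂μ, ‖-exp (η - x)‖ ≤ exp (η - a) := by
    filter_upwards [ha] with x hx
    rw [norm_neg, norm_of_nonneg (exp_pos _).le]
    gcongr
  have hint : Integrable (fun x ↦ exp (η - x) • f x) μ := by
    simpa only [Pi.smul_def, smul_smul, ← exp_add, ← sub_eq_add_neg] using hf.smul (exp η)
  have hmeas : AEStronglyMeasurable (fun x ↦ -exp (η - x)) μ := by fun_prop
  have hsum := hasSum_integral_pow_smul_of_norm_le (exp_pos _).le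
    (exp_lt_one_iff.mpr (sub_neg.mpr hη)) hmeas hratio hint
  convert hsum using 1
  · funext n
    simp_rw [← integral_smul, smul_smul, neg_exp_pow_mul_exp]
  · simp_rw [smul_smul, ← neg_sub _ η, inv_one_sub_neg_exp_mul_exp]

lemma integrableOn_exp_neg_mul_rpow_mul_sqrt {q β b : ℝ} (hq : -1 < q) (hβ : 0 ≤ β)
    (hb : 0 < b) :
    IntegrableOn (fun x ↦ exp (-b * x) * (x ^ q * √(1 + β * x / 2))) (Ioi 0) := by
  have hpow {s : ℝ} (hs : -1 < s) : IntegrableOn (fun x ↦ x ^ s * exp (-b * x)) (Ioi 0) := by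
    simpa only [rpow_one] using integrableOn_rpow_mul_exp_neg_mul_rpow hs one_pos hb
  have hdom : IntegrableOn
      (fun x ↦ x ^ q * exp (-b * x) + β / 4 * (x ^ (q + 1) * exp (-b * x))) (Ioi 0) :=
    (hpow hq).add ((hpow (by linarith)).const_mul _)
  refine hdom.mono' (by fun_prop) ((ae_restrict_mem measurableSet_Ioi).mono fun x hx ↦ ?_)
  have hx : 0 < x := hx
  have hβx : 0 ≤ β * x / 2 := by positivity
  calc
    ‖exp (-b * x) * (x ^ q * √(1 + β * x / 2))‖
        = exp (-b * x) * (x ^ q * √(1 + β * x / 2)) := norm_of_nonneg (by positivity)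
    _ ≤ exp (-b * x) * (x ^ q * (1 + β * x / 2 / 2)) := by
      gcongr
      exact sqrt_one_add_le (by linarith)
    _ = x ^ q * exp (-b * x) + β / 4 * (x ^ (q + 1) * exp (-b * x)) := by
      rw [rpow_add_one hx.ne']
      ring

theorem stmt0_general {q β η : ℝ} (hq : -1 < q) (hβ : 0 ≤ β) (hη : η < 0) :
    HasSum
      (fun n : ℕ ↦ (-1 : ℝ) ^ n * exp ((n + 1) * η) *
        ∫ x in Ioi (0 : ℝ), exp (-(n + 1) * x) * x ^ q * √(1 + β * x / 2))
      (Frel q η β) := by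
  have hnonneg : ∀ᵐ x ∂volume.restrict (Ioi (0 : ℝ)), 0 ≤ x :=
    (ae_restrict_mem measurableSet_Ioi).mono fun _ hx ↦ le_of_lt hx
  have hint : IntegrableOn (fun x ↦ exp (-x) • (x ^ q * √(1 + β * x / 2))) (Ioi 0) := by
    simpa only [neg_one_mul, smul_eq_mul] using integrableOn_exp_neg_mul_rpow_mul_sqrt hq hβ one_pos
  simpa only [Frel, smul_eq_mul, ← mul_assoc, div_eq_inv_mul] using
    hasSum_integral_inv_exp_sub_add_one_smul hη hnonneg hint

theorem stmt0 (q β η : ℝ) (hq : 0 ≤ q) (hβ : 0 ≤ β) (hη : η < 0) :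
    Summable (fun n : ℕ =>
      (-1 : ℝ) ^ n * Real.exp (((n : ℝ) + 1) * η) *
        ∫ x in Ioi (0 : ℝ),
          Real.exp (-((n : ℝ) + 1) * x) * x ^ q * Real.sqrt (1 + β * x / 2)) ∧
    Frel q η β = ∑' n : ℕ,
      (-1 : ℝ) ^ n * Real.exp (((n : ℝ) + 1) * η) *
        ∫ x in Ioi (0 : ℝ),
          Real.exp (-((n : ℝ) + 1) * x) * x ^ q * Real.sqrt (1 + β * x / 2) := by
  have h := stmt0_general (q := q) (by linarith) hβ hη
  exact ⟨h.summable, h.tsum_eq.symm⟩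
end

section
/- Fix q ≥ 0 and β ≥ 0, and for positive integers n set U_q(n,β) := (n^{q+1}/Γ(q+1)) ∫_0^∞ e^{-nx} x^q √(1+βx/2) dx. Then U_q(n,β) = 1 + O(1/n) as n → ∞; that is, the sequence n·(U_q(n,β) − 1) is bounded. -/
/-!
The factor `r ^ (q + 1) / Γ(q + 1)` normalizes `x ^ q * exp (-r x)` to the density of the gamma
distribution of shape `q + 1` and rate `r`. Hence `U_q(n, β)` is the expectation of `√(1 + β X / 2)`
for such a random variable `X` with `r = n`. Since `1 ≤ √(1 + t) ≤ 1 + t / 2` for `t ≥ 0`, it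
differs from `1` by at most `β / 4` times the mean `(q + 1) / n` of `X`.
-/

open Real MeasureTheory Set

/-- The slowly varying factor `U_q(n,β)` appearing in the convergent expansion of the
relativistic Fermi-Dirac integral. -/
noncomputable def Useq (q β : ℝ) (n : ℕ) : ℝ :=
  ((n : ℝ) ^ (q + 1) / Real.Gamma (q + 1)) *
    ∫ x in Ioi (0 : ℝ), Real.exp (-(n : ℝ) * x) * x ^ q * Real.sqrt (1 + β * x / 2)

open ProbabilityTheory

section ProbabilityMeasure

variable {Ω E : Type*} [MeasurableSpace Ω] [NormedAddCommGroup E] [NormedSpace ℝ E]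
  [CompleteSpace E] {μ : Measure Ω} [IsProbabilityMeasure μ] {f : Ω → E} {g : Ω → ℝ} {c : E}

theorem norm_integral_sub_const_le_of_norm_sub_le (hf : AEStronglyMeasurable f μ)
    (hg : Integrable g μ) (hfg : ∀ᵐ ω ∂μ, ‖f ω - c‖ ≤ g ω) :
    ‖∫ ω, f ω ∂μ - c‖ ≤ ∫ ω, g ω ∂μ := by
  have hsub : Integrable (fun ω ↦ f ω - c) μ :=
    hg.mono' (hf.sub aestronglyMeasurable_const) hfg
  have hf_int : Integrable f μ := by
    simpa only [Pi.add_def, sub_add_cancel] using hsub.add (integrable_const c)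
  calc ‖∫ ω, f ω ∂μ - c‖ = ‖∫ ω, (f ω - c) ∂μ‖ := by
        rw [integral_sub hf_int (integrable_const c), integral_const, probReal_univ, one_smul]
    _ ≤ ∫ ω, g ω ∂μ := norm_integral_le_of_norm_le hg hfg

end ProbabilityMeasure

section GammaMeasure

variable {a r : ℝ}

theorem measurable_gammaPDF (a r : ℝ) : Measurable (gammaPDF a r) :=
  (measurable_gammaPDFReal a r).ennreal_ofReal

theorem ae_pos_gammaMeasure (a r : ℝ) : ∀ᵐ x ∂gammaMeasure a r, 0 < x := by
  rw [gammaMeasure, ae_withDensity_iff (measurable_gammaPDF a r)]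
  filter_upwards [volume.ae_ne 0] with x hx_ne hx_pdf
  by_contra! hx
  exact hx_pdf (gammaPDF_of_neg (hx.lt_of_ne hx_ne))

theorem integral_gammaMeasure {E : Type*} [NormedAddCommGroup E] [NormedSpace ℝ E]
    (ha : 0 < a) (hr : 0 < r) (f : ℝ → E) :
    ∫ x, f x ∂gammaMeasure a r =
      (r ^ a / Real.Gamma a) • ∫ x in Ioi 0, (x ^ (a - 1) * exp (-(r * x))) • f x := by
  have hrestrict : gammaMeasure a r = (gammaMeasure a r).restrict (Ioi 0) :=
    (Measure.restrict_eq_self_of_ae_mem (ae_pos_gammaMeasure a r)).symm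
  rw [hrestrict, gammaMeasure,
    setIntegral_withDensity_eq_setIntegral_toReal_smul (measurable_gammaPDF a r)
      (ae_of_all _ fun _ ↦ ENNReal.ofReal_lt_top) f measurableSet_Ioi, ← integral_smul]
  refine setIntegral_congr_fun measurableSet_Ioi fun x hx ↦ ?_
  have hpdf_toReal : (gammaPDF a r x).toReal = gammaPDFReal a r x :=
    ENNReal.toReal_ofReal (gammaPDFReal_nonneg ha hr x)
  simp only [hpdf_toReal, gammaPDFReal, if_pos (mem_Ioi.mp hx).le, smul_smul, mul_assoc]

theorem integral_id_gammaMeasure (ha : 0 < a) (hr : 0 < r) :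
    ∫ x, x ∂gammaMeasure a r = a / r := by
  have hintegrand : EqOn (fun x : ℝ ↦ (x ^ (a - 1) * exp (-(r * x))) • x)
      (fun x ↦ x ^ (a + 1 - 1) * exp (-(r * x))) (Ioi 0) := by
    intro x hx
    simp only [add_sub_right_comm, rpow_add_one (mem_Ioi.mp hx).ne', smul_eq_mul]
    ring
  have hΓ : Real.Gamma a ≠ 0 := (Gamma_pos_of_pos ha).ne'
  rw [integral_gammaMeasure ha hr, setIntegral_congr_fun measurableSet_Ioi hintegrand,
    integral_rpow_mul_exp_neg_mul_Ioi (by positivity) hr, Gamma_add_one ha.ne',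
    one_div, inv_rpow hr.le, rpow_add_one hr.ne', smul_eq_mul]
  field_simp

theorem integrable_id_gammaMeasure (ha : 0 < a) (hr : 0 < r) :
    Integrable (fun x ↦ x) (gammaMeasure a r) :=
  .of_integral_ne_zero <| by
    rw [integral_id_gammaMeasure ha hr]
    positivity

theorem norm_integral_gammaMeasure_sub_const_le {E : Type*} [NormedAddCommGroup E]
    [NormedSpace ℝ E] [CompleteSpace E] (ha : 0 < a) (hr : 0 < r) {f : ℝ → E} {c : E} {L : ℝ}
    (hf : AEStronglyMeasurable f (gammaMeasure a r)) (hL : ∀ x > 0, ‖f x - c‖ ≤ L * x) :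
    ‖∫ x, f x ∂gammaMeasure a r - c‖ ≤ L * (a / r) := by
  have := isProbabilityMeasure_gammaMeasure ha hr
  rw [← integral_id_gammaMeasure ha hr, ← integral_const_mul]
  exact norm_integral_sub_const_le_of_norm_sub_le hf
    ((integrable_id_gammaMeasure ha hr).const_mul L) ((ae_pos_gammaMeasure a r).mono hL)

end GammaMeasure

theorem abs_sqrt_one_add_sub_one_le {t : ℝ} (ht : 0 ≤ t) : |√(1 + t) - 1| ≤ t / 2 := by
  have hlower : 1 ≤ √(1 + t) := one_le_sqrt.mpr (by linarith)
  have hupper : √(1 + t) ≤ 1 + t / 2 := sqrt_one_add_le (by linarith)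
  rw [abs_of_nonneg (sub_nonneg.mpr hlower)]
  linarith

theorem Useq_eq_integral_gammaMeasure {q : ℝ} (hq : -1 < q) (β : ℝ) {n : ℕ} (hn : 0 < n) :
    Useq q β n = ∫ x, √(1 + β * x / 2) ∂gammaMeasure (q + 1) n := by
  rw [integral_gammaMeasure (by linarith) (Nat.cast_pos.mpr hn), Useq]
  simp only [add_sub_cancel_right, smul_eq_mul, neg_mul, mul_comm (exp _)]

theorem stmt1_general {q β : ℝ} (hq : -1 < q) (hβ : 0 ≤ β) {n : ℕ} (hn : 0 < n) :
    |(n : ℝ) * (Useq q β n - 1)| ≤ β / 4 * (q + 1) := by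
  have hn' : (0 : ℝ) < n := Nat.cast_pos.mpr hn
  have hsqrt : ∀ x > 0, |√(1 + β * x / 2) - 1| ≤ β / 4 * x := fun x hx ↦
    (abs_sqrt_one_add_sub_one_le (by positivity)).trans_eq (by ring)
  have hU : |Useq q β n - 1| ≤ β / 4 * ((q + 1) / n) := by
    have hmeas : Measurable fun x ↦ √(1 + β * x / 2) := by fun_prop
    rw [Useq_eq_integral_gammaMeasure hq β hn]
    exact norm_integral_gammaMeasure_sub_const_le (neg_lt_iff_pos_add.mp hq) hn'
      hmeas.aestronglyMeasurable hsqrt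
  calc |(n : ℝ) * (Useq q β n - 1)| = n * |Useq q β n - 1| := by rw [abs_mul, abs_of_pos hn']
    _ ≤ n * (β / 4 * ((q + 1) / n)) := by gcongr
    _ = β / 4 * (q + 1) := by field_simp

/-- `U_q(n,β) = 1 + O(1/n)` as `n → ∞`: the sequence `n ⬝ (U_q(n,β) − 1)` is bounded. -/
theorem stmt1 (q β : ℝ) (hq : 0 ≤ q) (hβ : 0 ≤ β) :
    ∃ C : ℝ, ∀ n : ℕ, 1 ≤ n → |(n : ℝ) * (Useq q β n - 1)| ≤ C :=
  ⟨β / 4 * (q + 1), fun _ hn ↦ stmt1_general (by linarith) hβ hn⟩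
end

section
/- Let q > 0, β > 0, 0 < c < 1 and η ∈ ℝ. For complex s with Re s > 0 define U_q(s,β) := ((2s/β)^{q+1}/Γ(q+1)) ∫_0^∞ e^{-(2s/β)t} t^q √(1+t) dt (principal branch of the power). Then F_q(η,β) = (Γ(q+1)/2) ∫_{-∞}^∞ e^{η(c+it)} U_q(c+it,β) / ((c+it)^{q+1} sin(π(c+it))) dt, where (c+it)^{q+1} uses the principal branch. -/
open Real MeasureTheory Set

/-- The function `U_q(s,β)` for complex `s` with `Re s > 0` (principal branch of the power). -/
noncomputable def Uq (q β : ℝ) (s : ℂ) : ℂ :=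
  ((2 * s / (β : ℂ)) ^ ((q : ℂ) + 1) / Complex.Gamma ((q : ℂ) + 1)) *
    ∫ t in Ioi (0 : ℝ), Complex.exp (-(2 * s / (β : ℂ)) * (t : ℂ)) *
      ((t ^ q * Real.sqrt (1 + t) : ℝ) : ℂ)

/-!
On the strip `0 < Re s < 1` the Mellin transform of `1 / (1 + y)` is `B(s, 1 - s) = π / sin (π s)`.
Mellin inversion at `y = exp (x - η)` therefore writes the Fermi factor `1 / (exp (x - η) + 1)`,
which is `sigmoid (η - x)`, as an integral of `exp ((η - x) s) / sin (π s)` along `Re s = c`.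
Multiplying by a weight `f x` and exchanging the integrals leaves the Laplace transform of `f` at
`s`; for `f x = x ^ q * √(1 + β * x / 2)` the substitution `t = β x / 2` identifies it as
`Γ(q + 1) U_q(s, β) / s ^ (q + 1)`. Absolute convergence holds because `|sin (π (c + i t))|` is at
least `sin (π c) cosh (π t)`.
-/

section

open Complex (I VerticalIntegrable betaIntegral)

lemma image_one_add_inv_Ioi_zero : (fun y : ℝ ↦ (1 + y)⁻¹) '' Ioi 0 = Ioo 0 1 := by
  rw [← image_image (fun y : ℝ ↦ y⁻¹) (fun y ↦ 1 + y), image_const_add_Ioi, image_inv_eq_inv,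
    inv_Ioi₀ (by norm_num)]
  norm_num

lemma hasDerivAt_one_add_inv {y : ℝ} (hy : 1 + y ≠ 0) :
    HasDerivAt (fun y : ℝ ↦ (1 + y)⁻¹) (-1 / (1 + y) ^ 2) y :=
  ((hasDerivAt_id y).const_add 1).fun_inv hy

lemma antitoneOn_one_add_inv : AntitoneOn (fun y : ℝ ↦ (1 + y)⁻¹) (Ioi 0) := by
  intro x (hx : 0 < x) y _ hxy
  dsimp only
  gcongr

lemma betaIntegrand_one_add_inv (u v : ℂ) {y : ℝ} (hy : 0 < y) :
    (-(-1 / (1 + y) ^ 2)) •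
        ((((1 + y)⁻¹ : ℝ) : ℂ) ^ (u - 1) * (1 - (((1 + y)⁻¹ : ℝ) : ℂ)) ^ (v - 1)) =
      (y : ℂ) ^ (v - 1) • (1 + y : ℂ) ^ (-(u + v)) := by
  have h_pos : 0 < 1 + y := by positivity
  have h_ne : (1 + y : ℂ) ≠ 0 := mod_cast h_pos.ne'
  have h_inv (w : ℂ) : (((1 + y)⁻¹ : ℝ) : ℂ) ^ w = (1 + y : ℂ) ^ (-w) := by
    rw [Complex.ofReal_inv, Complex.inv_cpow_ofReal_nonneg h_pos.le, Complex.cpow_neg]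
    push_cast
    rfl
  have h_sub : 1 - (((1 + y)⁻¹ : ℝ) : ℂ) = y * ((1 + y)⁻¹ : ℝ) := by
    push_cast
    field_simp
    ring
  have h_sq : ((-(-1 / (1 + y) ^ 2) : ℝ) : ℂ) = (1 + y : ℂ) ^ (-2 : ℂ) := by
    rw [Complex.cpow_neg, Complex.cpow_ofNat]
    push_cast
    ring
  calc _ = (y : ℂ) ^ (v - 1) * ((1 + y : ℂ) ^ (-2 : ℂ) * (1 + y : ℂ) ^ (-(u - 1)) *
        (1 + y : ℂ) ^ (-(v - 1))) := by
        rw [h_sub, Complex.mul_cpow_ofReal_nonneg hy.le (by positivity), h_inv, h_inv,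
          Complex.real_smul, h_sq]
        ring
    _ = _ := by
        rw [← Complex.cpow_add _ _ h_ne, ← Complex.cpow_add _ _ h_ne, smul_eq_mul]
        ring_nf

theorem hasMellin_one_add_cpow_neg {u v : ℂ} (hu : 0 < u.re) (hv : 0 < v.re) :
    HasMellin (fun y : ℝ ↦ (1 + y : ℂ) ^ (-(u + v))) v (betaIntegral u v) := by
  have h_deriv (y : ℝ) (hy : y ∈ Ioi 0) :
      HasDerivWithinAt (fun y : ℝ ↦ (1 + y)⁻¹) (-1 / (1 + y) ^ 2) (Ioi 0) y :=
    (hasDerivAt_one_add_inv (by rw [mem_Ioi] at hy; positivity)).hasDerivWithinAt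
  constructor
  · have h_conv := Complex.betaIntegral_convergent hu hv
    rw [intervalIntegrable_iff_integrableOn_Ioo_of_le zero_le_one, ← image_one_add_inv_Ioi_zero,
      integrableOn_image_iff_integrableOn_deriv_smul_of_antitoneOn measurableSet_Ioi h_deriv
        antitoneOn_one_add_inv] at h_conv
    exact h_conv.congr_fun (fun y hy ↦ betaIntegrand_one_add_inv u v hy) measurableSet_Ioi
  · rw [betaIntegral, intervalIntegral.integral_of_le zero_le_one, integral_Ioc_eq_integral_Ioo,
      ← image_one_add_inv_Ioi_zero, integral_image_eq_integral_deriv_smul_of_antitoneOn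
        measurableSet_Ioi h_deriv antitoneOn_one_add_inv]
    exact setIntegral_congr_fun measurableSet_Ioi
      fun y hy ↦ (betaIntegrand_one_add_inv u v hy).symm

theorem hasMellin_one_add_inv {s : ℂ} (h0 : 0 < s.re) (h1 : s.re < 1) :
    HasMellin (fun y : ℝ ↦ (1 + y : ℂ)⁻¹) s (π / Complex.sin (π * s)) := by
  have h1' : 0 < (1 - s).re := by simpa using h1
  have h_beta : betaIntegral (1 - s) s = π / Complex.sin (π * s) := by
    rw [Complex.betaIntegral_symm, Complex.betaIntegral_eq_Gamma_mul_div _ _ h0 h1',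
      add_sub_cancel, Complex.Gamma_one, div_one, Complex.Gamma_mul_Gamma_one_sub]
  simpa only [sub_add_cancel, Complex.cpow_neg_one, h_beta] using
    hasMellin_one_add_cpow_neg h1' h0

lemma one_add_sq_div_two_le_cosh (x : ℝ) : 1 + x ^ 2 / 2 ≤ Real.cosh x := by
  have h_sinh : (x / 2) ^ 2 ≤ Real.sinh (x / 2) ^ 2 := by
    rw [sq_le_sq, Real.abs_sinh]
    exact Real.self_le_sinh_iff.2 (abs_nonneg _)
  calc 1 + x ^ 2 / 2 = 1 + 2 * (x / 2) ^ 2 := by ring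
    _ ≤ 1 + 2 * Real.sinh (x / 2) ^ 2 := by gcongr
    _ = Real.cosh (2 * (x / 2)) := by rw [Real.cosh_two_mul, Real.cosh_sq]; ring
    _ = Real.cosh x := by rw [mul_div_cancel₀ x two_ne_zero]

lemma abs_sin_mul_cosh_le_norm_sin (x y : ℝ) :
    |Real.sin x| * Real.cosh y ≤ ‖Complex.sin (x + y * I)‖ := by
  have h_re : (Complex.sin (x + y * I)).re = Real.sin x * Real.cosh y := by
    simp [Complex.sin_add_mul_I, ← Complex.ofReal_sin, ← Complex.ofReal_cosh,
      ← Complex.ofReal_cos, ← Complex.ofReal_sinh]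
  rw [← abs_of_pos (Real.cosh_pos y), ← abs_mul, ← h_re]
  exact Complex.abs_re_le_norm _

theorem verticalIntegrable_inv_sin_mul {a σ : ℝ} (h : Real.sin (a * σ) ≠ 0) :
    VerticalIntegrable (fun s ↦ (Complex.sin (a * s))⁻¹) σ := by
  have ha : a ≠ 0 := by
    rintro rfl
    simp at h
  have h_bound (t : ℝ) : |Real.sin (a * σ)| / 2 * (1 + (a * t) ^ 2) ≤
      ‖Complex.sin (a * (σ + t * I))‖ :=
    calc _ = |Real.sin (a * σ)| * (1 / 2 + (a * t) ^ 2 / 2) := by ring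
      _ ≤ |Real.sin (a * σ)| * Real.cosh (a * t) := by
          gcongr
          linarith [one_add_sq_div_two_le_cosh (a * t)]
      _ ≤ _ := by
          convert abs_sin_mul_cosh_le_norm_sin (a * σ) (a * t) using 3
          push_cast
          ring
  refine ((integrable_inv_one_add_sq.comp_mul_left' ha).const_mul
    (|Real.sin (a * σ)| / 2)⁻¹).mono' (by fun_prop) (.of_forall fun t ↦ ?_)
  rw [norm_inv, ← mul_inv]
  exact inv_anti₀ (by positivity) (h_bound t)

variable {c : ℝ}

lemma verticalIntegrable_inv_sin_pi_mul (hc0 : 0 < c) (hc1 : c < 1) :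
    VerticalIntegrable (fun s ↦ (Complex.sin (π * s))⁻¹) c :=
  verticalIntegrable_inv_sin_mul <| ne_of_gt <|
    Real.sin_pos_of_pos_of_lt_pi (by positivity) (mul_lt_of_lt_one_right pi_pos hc1)

theorem mellinInv_pi_div_sin (hc0 : 0 < c) (hc1 : c < 1) {x : ℝ} (hx : 0 < x) :
    mellinInv c (fun s ↦ π / Complex.sin (π * s)) x = (1 + x : ℂ)⁻¹ := by
  have h_mellin (t : ℝ) : HasMellin (fun y : ℝ ↦ (1 + y : ℂ)⁻¹) (c + t * I)
      (π / Complex.sin (π * (c + t * I))) :=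
    hasMellin_one_add_inv (by simpa using hc0) (by simpa using hc1)
  have h_cont : ContinuousAt (fun y : ℝ ↦ (1 + y : ℂ)⁻¹) x := by
    have : (1 + x : ℂ) ≠ 0 := mod_cast (add_pos one_pos hx).ne'
    fun_prop (disch := assumption)
  have h_vert : VerticalIntegrable (mellin fun y : ℝ ↦ (1 + y : ℂ)⁻¹) c := by
    simp only [VerticalIntegrable, (h_mellin _).2, div_eq_mul_inv]
    exact (verticalIntegrable_inv_sin_pi_mul hc0 hc1).const_mul _
  have h_inv := mellinInv_mellin_eq c _ hx (by simpa using (h_mellin 0).1) h_vert h_cont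
  simpa only [mellinInv, (h_mellin _).2] using h_inv

theorem integral_cexp_div_sin_pi_mul (hc0 : 0 < c) (hc1 : c < 1) (u : ℝ) :
    ∫ t : ℝ, Complex.exp (u * (c + t * I)) / Complex.sin (π * (c + t * I)) =
      2 * (sigmoid u : ℂ) := by
  have h_cpow (s : ℂ) : ((Real.exp (-u) : ℝ) : ℂ) ^ (-s) = Complex.exp (u * s) := by
    rw [Complex.cpow_def_of_ne_zero (mod_cast (Real.exp_pos _).ne'),
      ← Complex.ofReal_log (Real.exp_pos _).le, Real.log_exp]
    push_cast
    ring_nf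
  have h_const (z : ℂ) : ((1 / (2 * π) : ℝ) : ℂ) * (π * z) = z / 2 := by
    have : (π : ℂ) ≠ 0 := mod_cast pi_ne_zero
    push_cast
    field_simp
  have h_inv := mellinInv_pi_div_sin hc0 hc1 (Real.exp_pos (-u))
  simp only [mellinInv, h_cpow, smul_eq_mul, mul_div_left_comm _ (π : ℂ), integral_const_mul,
    Complex.real_smul, h_const, div_eq_iff (two_ne_zero (α := ℂ))] at h_inv
  rw [h_inv, sigmoid_def, mul_comm]
  push_cast
  rfl

lemma integrable_prod_cexp_div_sin_mul {μ : Measure ℝ} [SFinite μ] {f : ℝ → ℂ}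
    (hc0 : 0 < c) (hc1 : c < 1) (η : ℝ)
    (hf : Integrable (fun x ↦ (Real.exp (-c * x) : ℂ) * f x) μ) :
    Integrable (fun p : ℝ × ℝ ↦ Complex.exp ((η - p.1 : ℝ) * (c + p.2 * I)) /
      Complex.sin (π * (c + p.2 * I)) * f p.1) (μ.prod volume) := by
  have h_phase (p : ℝ × ℝ) : ‖Complex.exp (η * c + ((η - p.1) * p.2 : ℝ) * I)‖ ≤
      Real.exp (η * c) := by
    rw [Complex.exp_add, norm_mul, Complex.norm_exp_ofReal_mul_I, mul_one, Complex.norm_exp]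
    simp
  refine ((hf.mul_prod (verticalIntegrable_inv_sin_pi_mul hc0 hc1)).bdd_mul (by fun_prop)
    (.of_forall h_phase)).congr (.of_forall fun p ↦ ?_)
  have h_exp : Complex.exp ((η - p.1 : ℝ) * (c + p.2 * I)) =
      Complex.exp (η * c + ((η - p.1) * p.2 : ℝ) * I) * Real.exp (-c * p.1) := by
    rw [Complex.ofReal_exp, ← Complex.exp_add]
    push_cast
    ring_nf
  simp only [h_exp]
  ring

theorem integral_sigmoid_mul_eq {μ : Measure ℝ} [SFinite μ] {f : ℝ → ℂ}
    (hc0 : 0 < c) (hc1 : c < 1) (η : ℝ)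
    (hf : Integrable (fun x ↦ (Real.exp (-c * x) : ℂ) * f x) μ) :
    ∫ x, (sigmoid (η - x) : ℂ) * f x ∂μ =
      1 / 2 * ∫ t : ℝ, Complex.exp (η * (c + t * I)) / Complex.sin (π * (c + t * I)) *
        ∫ x, Complex.exp (-(c + t * I) * x) * f x ∂μ := by
  have h_split (x : ℝ) (s : ℂ) : Complex.exp ((η - x : ℝ) * s) / Complex.sin (π * s) * f x =
      Complex.exp (η * s) / Complex.sin (π * s) * (Complex.exp (-s * x) * f x) := by
    rw [show ((η - x : ℝ) : ℂ) * s = η * s + -s * x by push_cast; ring, Complex.exp_add]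
    ring
  calc _ = ∫ x, 1 / 2 * (∫ t : ℝ, Complex.exp ((η - x : ℝ) * (c + t * I)) /
        Complex.sin (π * (c + t * I)) * f x) ∂μ := by
        congr with x
        rw [integral_mul_const, integral_cexp_div_sin_pi_mul hc0 hc1]
        ring
    _ = 1 / 2 * ∫ t : ℝ, ∫ x, Complex.exp ((η - x : ℝ) * (c + t * I)) /
        Complex.sin (π * (c + t * I)) * f x ∂μ := by
        rw [integral_const_mul,
          integral_integral_swap (integrable_prod_cexp_div_sin_mul hc0 hc1 η hf)]
    _ = _ := by simp only [h_split, integral_const_mul]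

lemma integrableOn_exp_mul_rpow_mul_sqrt {q β b : ℝ} (hq : -1 < q) (hβ : 0 ≤ β) (hb : 0 < b) :
    IntegrableOn (fun x ↦ Real.exp (-b * x) * (x ^ q * √(1 + β * x / 2))) (Ioi 0) := by
  have h_rpow {r : ℝ} (hr : -1 < r) :
      IntegrableOn (fun x : ℝ ↦ x ^ r * Real.exp (-b * x)) (Ioi 0) := by
    simpa only [rpow_one] using integrableOn_rpow_mul_exp_neg_mul_rpow hr one_pos hb
  refine ((h_rpow hq).add ((h_rpow (r := q + 1) (by linarith)).const_mul (β / 2))).mono'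
    (by fun_prop) ?_
  filter_upwards [ae_restrict_mem measurableSet_Ioi] with x (hx : 0 < x)
  have h_sqrt : √(1 + β * x / 2) ≤ 1 + β * x / 2 := by
    refine sqrt_le_self_iff.2 (.inr (le_add_of_nonneg_right ?_))
    positivity
  calc _ = Real.exp (-b * x) * (x ^ q * √(1 + β * x / 2)) := Real.norm_of_nonneg (by positivity)
    _ ≤ Real.exp (-b * x) * (x ^ q * (1 + β * x / 2)) := by gcongr
    _ = _ := by
        simp only [Pi.add_apply, rpow_add_one hx.ne']
        ring

lemma Frel_eq_integral_sigmoid (q η β : ℝ) :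
    (Frel q η β : ℂ) =
      ∫ x in Ioi (0 : ℝ), (sigmoid (η - x) : ℂ) * ((x ^ q * √(1 + β * x / 2) : ℝ) : ℂ) := by
  rw [Frel, ← integral_complex_ofReal]
  congr with x
  rw [← Complex.ofReal_mul, sigmoid_def, neg_sub, add_comm 1 (rexp _), div_eq_inv_mul]

lemma ofReal_mul_cpow {r : ℝ} (hr : 0 ≤ r) (z w : ℂ) :
    ((r : ℂ) * z) ^ w = (r : ℂ) ^ w * z ^ w := by
  rcases eq_or_ne w 0 with rfl | hw
  · simp
  rcases hr.eq_or_lt with rfl | hr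
  · simp [hw]
  rcases eq_or_ne z 0 with rfl | hz
  · simp [hw]
  have hr' : (r : ℂ) ≠ 0 := mod_cast hr.ne'
  rw [Complex.cpow_def_of_ne_zero (mul_ne_zero hr' hz), Complex.cpow_def_of_ne_zero hr',
    Complex.cpow_def_of_ne_zero hz, Complex.log_ofReal_mul hr hz, Complex.ofReal_log hr.le,
    add_mul, Complex.exp_add]

lemma integral_cexp_mul_rpow_mul_sqrt (q : ℝ) {β : ℝ} (hβ : 0 < β) (s : ℂ) :
    ∫ x in Ioi (0 : ℝ), Complex.exp (-s * x) * ((x ^ q * √(1 + β * x / 2) : ℝ) : ℂ) =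
      ((2 / β : ℝ) : ℂ) ^ (q + 1 : ℂ) *
        ∫ t in Ioi (0 : ℝ), Complex.exp (-(2 * s / β) * t) * ((t ^ q * √(1 + t) : ℝ) : ℂ) := by
  have hr : 0 < 2 / β := by positivity
  have h_scale : ∀ t ∈ Ioi (0 : ℝ), Complex.exp (-s * ((2 / β * t : ℝ) : ℂ)) *
      (((2 / β * t) ^ q * √(1 + β * (2 / β * t) / 2) : ℝ) : ℂ) =
      (((2 / β) ^ q : ℝ) : ℂ) *
        (Complex.exp (-(2 * s / β) * t) * ((t ^ q * √(1 + t) : ℝ) : ℂ)) := by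
    intro t (ht : 0 < t)
    rw [Real.mul_rpow hr.le ht.le, show 1 + β * (2 / β * t) / 2 = 1 + t by field_simp,
      show -s * ((2 / β * t : ℝ) : ℂ) = -(2 * s / β) * t by push_cast; ring]
    push_cast
    ring
  have h_pow : ((2 / β : ℝ) : ℂ) ^ (q + 1 : ℂ) = (2 / β : ℝ) * (((2 / β) ^ q : ℝ) : ℂ) := by
    rw [Complex.cpow_add _ _ (mod_cast hr.ne'), Complex.cpow_one, Complex.ofReal_cpow hr.le,
      mul_comm]
  rw [h_pow, mul_assoc, ← integral_const_mul, ← setIntegral_congr_fun measurableSet_Ioi h_scale,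
    ← Complex.real_smul, integral_comp_mul_left_Ioi' (fun x : ℝ ↦ Complex.exp (-s * x) *
      ((x ^ q * √(1 + β * x / 2) : ℝ) : ℂ)) 0 hr, mul_zero]

theorem Gamma_mul_Uq_div_cpow {q β : ℝ} (hq : -1 < q) (hβ : 0 < β) {s : ℂ} (hs : s ≠ 0) :
    Complex.Gamma (q + 1) * Uq q β s / s ^ (q + 1 : ℂ) =
      ∫ x in Ioi (0 : ℝ), Complex.exp (-s * x) * ((x ^ q * √(1 + β * x / 2) : ℝ) : ℂ) := by
  have h_Gamma : Complex.Gamma (q + 1) ≠ 0 :=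
    Complex.Gamma_ne_zero_of_re_pos (by simpa using neg_lt_iff_pos_add.1 hq)
  have h_cpow : s ^ (q + 1 : ℂ) ≠ 0 := by simp [Complex.cpow_eq_zero_iff, hs]
  have h_scale : 2 * s / β = ((2 / β : ℝ) : ℂ) * s := by push_cast; ring
  have h_mul : (2 * s / β) ^ (q + 1 : ℂ) = ((2 / β : ℝ) : ℂ) ^ (q + 1 : ℂ) * s ^ (q + 1 : ℂ) := by
    rw [h_scale, ofReal_mul_cpow (by positivity)]
  rw [integral_cexp_mul_rpow_mul_sqrt q hβ, Uq, h_mul]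
  field_simp

end

theorem stmt2_general (q β c η : ℝ) (hq : -1 < q) (hβ : 0 < β) (hc0 : 0 < c) (hc1 : c < 1) :
    (Frel q η β : ℂ) = (Complex.Gamma ((q : ℂ) + 1) / 2) *
      ∫ t : ℝ, Complex.exp ((η : ℂ) * ((c : ℂ) + t * Complex.I)) *
          Uq q β ((c : ℂ) + t * Complex.I) /
        (((c : ℂ) + t * Complex.I) ^ ((q : ℂ) + 1) *
          Complex.sin ((π : ℂ) * ((c : ℂ) + t * Complex.I))) := by
  have h_ne (t : ℝ) : (c : ℂ) + t * Complex.I ≠ 0 :=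
    ne_of_apply_ne Complex.re (by simpa using hc0.ne')
  have h_int : IntegrableOn (fun x : ℝ ↦
      (Real.exp (-c * x) : ℂ) * ((x ^ q * √(1 + β * x / 2) : ℝ) : ℂ)) (Ioi 0) :=
    mod_cast (integrableOn_exp_mul_rpow_mul_sqrt hq hβ.le hc0).ofReal (𝕜 := ℂ)
  rw [Frel_eq_integral_sigmoid, integral_sigmoid_mul_eq hc0 hc1 η h_int,
    ← integral_const_mul, ← integral_const_mul]
  congr with t
  rw [← Gamma_mul_Uq_div_cpow hq hβ (h_ne t)]
  ring

theorem stmt2 (q β c η : ℝ) (hq : 0 < q) (hβ : 0 < β) (hc0 : 0 < c) (hc1 : c < 1) :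
    (Frel q η β : ℂ) = (Complex.Gamma ((q : ℂ) + 1) / 2) *
      ∫ t : ℝ, Complex.exp ((η : ℂ) * ((c : ℂ) + t * Complex.I)) *
          Uq q β ((c : ℂ) + t * Complex.I) /
        (((c : ℂ) + t * Complex.I) ^ ((q : ℂ) + 1) *
          Complex.sin ((π : ℂ) * ((c : ℂ) + t * Complex.I))) :=
  stmt2_general q β c η (by linarith) hβ hc0 hc1
end

section
/- Let q ≥ 0 and η < 0. Then the series Σ_{n=1}^∞ (-1)^{n-1} e^{nη}/n^{q+1} converges and F_q(η) = Γ(q+1) Σ_{n=1}^∞ (-1)^{n-1} e^{nη}/n^{q+1}. -/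
open Real MeasureTheory Set

/-- The standard Fermi-Dirac integral. -/
noncomputable def Fstd (q η : ℝ) : ℝ :=
  ∫ x in Ioi (0 : ℝ), x ^ q / (Real.exp (x - η) + 1)

/-!
Expanding the geometric series `z / (eᵗ - z) = ∑ zⁿ⁺¹ e^{-(n+1)t}` and taking Mellin transforms
termwise gives the integral representation `∫₀^∞ tˢ⁻¹ z / (eᵗ - z) dt = Γ(s) ∑ zⁿ⁺¹ / (n+1)ˢ` of the
polylogarithm. The Fermi-Dirac integral `F_q(η)` is minus the case `z = -e^η`, `s = q + 1`.
-/

theorem summable_pow_succ_div_rpow {r σ : ℝ} (hr₀ : 0 ≤ r) (hσ : 0 ≤ σ)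
    (h : r < 1 ∨ r = 1 ∧ 1 < σ) : Summable fun n : ℕ => r ^ (n + 1) / ((n : ℝ) + 1) ^ σ := by
  rcases h with hr₁ | ⟨rfl, hσ₁⟩
  · refine Summable.of_nonneg_of_le (fun n => by positivity) (fun n => ?_)
      ((summable_nat_add_iff 1).2 (summable_geometric_of_lt_one hr₀ hr₁))
    exact div_le_self (by positivity) (Real.one_le_rpow (by simp) hσ)
  · simpa only [one_pow, Nat.cast_succ] using
      (summable_nat_add_iff 1).2 (Real.summable_one_div_nat_rpow.2 hσ₁)

theorem hasSum_pow_succ_mul_exp_neg {z : ℂ} {t : ℝ} (hz : ‖z‖ < Real.exp t) :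
    HasSum (fun n : ℕ => z ^ (n + 1) * (Real.exp (-((n : ℝ) + 1) * t) : ℂ))
      (z / (Real.exp t - z)) := by
  have ht : (Real.exp t : ℂ) ≠ 0 := Complex.ofReal_ne_zero.2 (Real.exp_pos t).ne'
  have hw : ‖z / Real.exp t‖ < 1 := by
    rwa [norm_div, Complex.norm_real, Real.norm_of_nonneg (Real.exp_pos t).le,
      div_lt_one (Real.exp_pos t)]
  have hterm (n : ℕ) : z ^ (n + 1) * (Real.exp (-((n : ℝ) + 1) * t) : ℂ) =
      z / Real.exp t * (z / Real.exp t) ^ n := by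
    rw [← pow_succ', div_pow, ← Complex.ofReal_pow, ← Real.exp_nat_mul, neg_mul, Real.exp_neg,
      Complex.ofReal_inv, div_eq_mul_inv, Nat.cast_succ]
  have hsum : z / (Real.exp t - z) = z / Real.exp t * (1 - z / Real.exp t)⁻¹ := by
    rw [one_sub_div ht, inv_div, div_mul_div_cancel₀ ht]
  simpa only [hterm, hsum] using (hasSum_geometric_of_norm_lt_one hw).mul_left (z / Real.exp t)

theorem hasSum_mellin_div_exp_sub {z s : ℂ} (hs : 0 < s.re) (hz : ‖z‖ < 1 ∨ ‖z‖ = 1 ∧ 1 < s.re) :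
    HasSum (fun n : ℕ => Complex.Gamma s * z ^ (n + 1) / (((n : ℝ) + 1 : ℝ) : ℂ) ^ s)
      (mellin (fun t : ℝ => z / (Real.exp t - z)) s) := by
  have hle : ‖z‖ ≤ 1 := hz.elim le_of_lt fun h => h.1.le
  have hsum : Summable fun n : ℕ => ‖z ^ (n + 1)‖ / ((n : ℝ) + 1) ^ s.re := by
    simpa only [norm_pow] using summable_pow_succ_div_rpow (norm_nonneg z) hs.le hz
  exact hasSum_mellin (fun n => Or.inr n.cast_add_one_pos) hs
    (fun _ ht => hasSum_pow_succ_mul_exp_neg (hle.trans_lt (Real.one_lt_exp_iff.2 ht))) hsum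

theorem mellin_neg_exp_div_exp_sub (q η : ℝ) :
    mellin (fun t : ℝ => (-Real.exp η : ℂ) / (Real.exp t - -Real.exp η)) ((q + 1 : ℝ) : ℂ) =
      -(Fstd q η : ℂ) := by
  rw [mellin, Fstd, ← integral_complex_ofReal, ← integral_neg]
  refine setIntegral_congr_fun measurableSet_Ioi fun t (ht : 0 < t) => ?_
  have hpow : (t : ℂ) ^ (((q + 1 : ℝ) : ℂ) - 1) = ((t ^ q : ℝ) : ℂ) := by
    rw [Complex.ofReal_cpow ht.le, Complex.ofReal_add, Complex.ofReal_one, add_sub_cancel_right]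
  have hfrac : Real.exp η / (Real.exp t + Real.exp η) = 1 / (Real.exp (t - η) + 1) := by
    rw [Real.exp_sub, div_add_one (Real.exp_ne_zero η), one_div_div]
  simp only [smul_eq_mul]
  rw [hpow, neg_div, sub_neg_eq_add, mul_neg, ← mul_one_div (t ^ q), ← hfrac]
  norm_cast

theorem hasSum_Fstd {q η : ℝ} (hq : -1 < q) (hη : η < 0 ∨ η = 0 ∧ 0 < q) :
    HasSum (fun n : ℕ => Real.Gamma (q + 1) *
      ((-1 : ℝ) ^ n * Real.exp (((n : ℝ) + 1) * η) / ((n : ℝ) + 1) ^ (q + 1))) (Fstd q η) := by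
  have hnorm : ‖(-Real.exp η : ℂ)‖ = Real.exp η := by
    rw [norm_neg, Complex.norm_real, Real.norm_of_nonneg (Real.exp_pos η).le]
  have hre : 0 < ((q + 1 : ℝ) : ℂ).re := by
    rw [Complex.ofReal_re]
    linarith
  have hz : ‖(-Real.exp η : ℂ)‖ < 1 ∨
      ‖(-Real.exp η : ℂ)‖ = 1 ∧ 1 < ((q + 1 : ℝ) : ℂ).re := by
    rwa [hnorm, Real.exp_lt_one_iff, Real.exp_eq_one_iff, Complex.ofReal_re, lt_add_iff_pos_left]
  have hmellin := (hasSum_mellin_div_exp_sub hre hz).neg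
  rw [mellin_neg_exp_div_exp_sub, neg_neg] at hmellin
  rw [← Complex.hasSum_ofReal]
  refine hmellin.congr_fun fun n => ?_
  have hpow : (-Real.exp η : ℂ) ^ (n + 1) =
      -(((-1 : ℝ) ^ n * Real.exp (((n : ℝ) + 1) * η) : ℝ) : ℂ) := by
    rw [← Nat.cast_add_one, Real.exp_nat_mul, neg_pow, pow_succ (-1 : ℂ)]
    push_cast
    ring
  rw [Complex.Gamma_ofReal, ← Complex.ofReal_cpow n.cast_add_one_pos.le, hpow]
  push_cast
  ring

theorem stmt4_general (q η : ℝ) (hq : -1 < q) (hη : η < 0 ∨ η = 0 ∧ 0 < q) :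
    Summable (fun n : ℕ => (-1 : ℝ) ^ n * Real.exp (((n : ℝ) + 1) * η) / ((n : ℝ) + 1) ^ (q + 1)) ∧
    Fstd q η = Real.Gamma (q + 1) *
      ∑' n : ℕ, (-1 : ℝ) ^ n * Real.exp (((n : ℝ) + 1) * η) / ((n : ℝ) + 1) ^ (q + 1) := by
  have hΓ : Real.Gamma (q + 1) ≠ 0 := (Real.Gamma_pos_of_pos (by linarith)).ne'
  have hF := hasSum_Fstd hq hη
  exact ⟨(summable_mul_left_iff hΓ).1 hF.summable, by rw [← tsum_mul_left, hF.tsum_eq]⟩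

theorem stmt4 (q η : ℝ) (hq : 0 ≤ q) (hη : η < 0) :
    Summable (fun n : ℕ => (-1 : ℝ) ^ n * Real.exp (((n : ℝ) + 1) * η) / ((n : ℝ) + 1) ^ (q + 1)) ∧
    Fstd q η = Real.Gamma (q + 1) *
      ∑' n : ℕ, (-1 : ℝ) ^ n * Real.exp (((n : ℝ) + 1) * η) / ((n : ℝ) + 1) ^ (q + 1) :=
  stmt4_general q η (by linarith) (Or.inl hη)
end

section
/- Let β > 0, let q ≥ 0 be such that q is not of the form k + 1/2 for a nonnegative integer k, and let 0 < c < 1. Define f_2(s) = (πs/sin(πs)) · M(−1/2; −q−1/2; 2s/β) and F_q^{(2)}(η,β) = (1/(2π)) ∫_{-∞}^∞ e^{η(c+it)} f_2(c+it)/(c+it)^{q+5/2} dt (principal branch). Define coefficients a_n = Σ_{j: 2j ≤ n} τ_{2j} · (2/β)^{n−2j} (−1/2)_{n−2j} / ((−q−1/2)_{n−2j} (n−2j)!). Then for every η > 0 the series S(η) := sin(πq) Σ_{n=1}^∞ (−1)^n (e^{−nη}/n^{q+1}) M(−1/2; −q−1/2; −2n/β) converges, and for every integer N ≥ 1, as η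 → +∞, F_q^{(2)}(η,β) − S(η) − η^{q+3/2} Σ_{n=0}^{N−1} a_n/(Γ(q+5/2−n) η^n) = O(η^{q+3/2−N}). -/
open Real MeasureTheory Set Finset Filter Asymptotics

/-- Kummer's confluent hypergeometric function `M(a;b;z)` as a power series. -/
noncomputable def kummerM (a b z : ℂ) : ℂ :=
  ∑' k : ℕ, (ascPochhammer ℂ k).eval a /
      ((ascPochhammer ℂ k).eval b * (k.factorial : ℂ)) * z ^ k

/-- The coefficients `τ_{2j}`: `τ_0 = 1` and `τ_{2j} = 2(1 − 2^{1−2j}) ζ(2j)` for `j ≥ 1`. -/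
noncomputable def tau2 (j : ℕ) : ℂ :=
  if j = 0 then 1 else 2 * (1 - (2 : ℂ) ^ (1 - 2 * (j : ℤ))) * riemannZeta (2 * j)

/-- The function `f_2(s)`. -/
noncomputable def f2 (q β : ℝ) (s : ℂ) : ℂ :=
  (π : ℂ) * s / Complex.sin ((π : ℂ) * s) *
    kummerM (-1 / 2) (-(q : ℂ) - 1 / 2) (2 * s / (β : ℂ))

/-- The function `F_q^{(2)}(η,β)` (principal branch for the complex power). -/
noncomputable def F2 (q β c η : ℝ) : ℂ :=
  (1 / (2 * (π : ℂ))) * ∫ t : ℝ,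
    Complex.exp ((η : ℂ) * ((c : ℂ) + t * Complex.I)) *
      f2 q β ((c : ℂ) + t * Complex.I) /
        ((c : ℂ) + t * Complex.I) ^ ((q : ℂ) + 5 / 2)

/-- The coefficients `a_n`. -/
noncomputable def acoef (q β : ℝ) (n : ℕ) : ℂ :=
  ∑ j ∈ Finset.range (n / 2 + 1),
    tau2 j * (2 / (β : ℂ)) ^ (n - 2 * j) *
      (ascPochhammer ℂ (n - 2 * j)).eval (-1 / 2) /
        ((ascPochhammer ℂ (n - 2 * j)).eval (-(q : ℂ) - 1 / 2) *
          ((n - 2 * j).factorial : ℂ))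

/-- The general term of the exponentially small convergent series (the series starts at `n = 1`,
here re-indexed by `n = m + 1`). -/
noncomputable def Sterm (q β η : ℝ) (m : ℕ) : ℂ :=
  (-1 : ℂ) ^ (m + 1) *
    ((Real.exp (-((m : ℝ) + 1) * η) / ((m : ℝ) + 1) ^ (q + 1) : ℝ) : ℂ) *
      kummerM (-1 / 2) (-(q : ℂ) - 1 / 2) (-2 * ((m : ℂ) + 1) / (β : ℂ))

/-- The sum `S(η)`. -/
noncomputable def Sfun (q β η : ℝ) : ℂ :=
  ((Real.sin (π * q) : ℝ) : ℂ) * ∑' m : ℕ, Sterm q β η m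

/-!
Euler's integral bounds `M(a;b;z)` when `0 < Re a < Re b`, and contiguous relations extend the bound
to all admissible parameters: polynomial growth times `max 1 e^{Re z}`. Since `πs / sin (πs)` decays
exponentially away from the real axis, so does `f₂` in every vertical strip. The line of integration
may therefore be moved to `Re s = 1 / η` within the strip `0 < Re s < 1`, and `k` integrations by
parts exchange `f₂(s) s^{-(q+5/2)}` for its `k`-th derivative at the cost of a factor `(-η)^{-k}`.

The Taylor coefficients of `f₂` at `0` are the `a_n`. Subtracting the first `N` terms of the
expansion leaves a remainder whose `k`-th derivative is `O(|s|^{N-q-5/2-k})` on the lines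
`Re s = 1 / η`, by Cauchy's estimates on discs of radius comparable to `|s|`, and scaling
`t ↦ t / η` bounds its contribution by `η^{q+3/2-N}`. The subtracted powers are inverse Laplace
transforms and contribute exactly `η^{q+3/2-n} / Γ(q+5/2-n)`. Finally `S(η)` is exponentially small.
-/

/-! ### Growth of Kummer's function -/

/-- The coefficient of `z ^ k` in `M(a;b;z)`. -/
noncomputable def kummerCoeff (a b : ℂ) (k : ℕ) : ℂ :=
  (ascPochhammer ℂ k).eval a / ((ascPochhammer ℂ k).eval b * (k.factorial : ℂ))

/-- The growth type of Kummer's function: polynomial on the left half-plane, and polynomial times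
`e ^ Re z` on the right one. -/
def HasKummerGrowth (f : ℂ → ℂ) : Prop :=
  ∃ (C : ℝ) (K : ℕ), ∀ z, ‖f z‖ ≤ C * (1 + ‖z‖) ^ K * max 1 (rexp z.re)

section Kummer

variable {a b : ℂ}

lemma ascPochhammer_eval_ne_zero (hb : ∀ k : ℕ, b ≠ -k) (k : ℕ) :
    (ascPochhammer ℂ k).eval b ≠ 0 := by
  rw [Ne, ascPochhammer_eval_eq_zero_iff]
  rintro ⟨m, -, hm⟩
  exact hb m (by rw [hm, neg_neg])

lemma ascPochhammer_succ_eval_left (a : ℂ) (k : ℕ) :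
    (ascPochhammer ℂ (k + 1)).eval a = a * (ascPochhammer ℂ k).eval (a + 1) := by
  simp [ascPochhammer_succ_left, Polynomial.eval_comp]

lemma add_one_ne_neg_natCast (hb : ∀ k : ℕ, b ≠ -k) (k : ℕ) : b + 1 ≠ -k := by
  intro h
  refine hb (k + 1) ?_
  push_cast
  linear_combination h

lemma ne_neg_natCast_of_re_pos (hb : 0 < b.re) (k : ℕ) : b ≠ -k := by
  rintro rfl
  simp only [Complex.neg_re, Complex.natCast_re, Left.neg_pos_iff] at hb
  exact hb.not_ge k.cast_nonneg

lemma kummerCoeff_succ (a b : ℂ) (k : ℕ) :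
    kummerCoeff a b (k + 1) = kummerCoeff a b k * ((a + k) / ((b + k) * (k + 1))) := by
  simp only [kummerCoeff, ascPochhammer_succ_eval, Nat.factorial_succ, Nat.cast_mul, Nat.cast_succ,
    div_mul_div_comm]
  congr 1
  ring

lemma kummerCoeff_succ_eq_add (hb : ∀ k : ℕ, b ≠ -k) (k : ℕ) :
    kummerCoeff a b (k + 1) =
      kummerCoeff a (b + 1) (k + 1) + a / (b * (b + 1)) * kummerCoeff (a + 1) (b + 1 + 1) k := by
  have hb' := add_one_ne_neg_natCast hb
  have h0 : b ≠ 0 := by simpa using hb 0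
  have h1 : b + 1 ≠ 0 := by simpa using hb' 0
  have hk : b + 1 + k ≠ 0 := fun h => hb' k (eq_neg_of_add_eq_zero_left h)
  have hP := ascPochhammer_eval_ne_zero (add_one_ne_neg_natCast hb') k
  have hshift : (ascPochhammer ℂ k).eval (b + 1) =
      (b + 1) * (ascPochhammer ℂ k).eval (b + 1 + 1) / (b + 1 + k) := by
    rw [eq_div_iff hk, ← ascPochhammer_succ_eval_left, ascPochhammer_succ_eval]
  simp only [kummerCoeff, ascPochhammer_succ_eval_left, Nat.factorial_succ, Nat.cast_mul,
    Nat.cast_succ, hshift]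
  field_simp
  ring

lemma kummerCoeff_succ_eq_sub (hb : ∀ k : ℕ, b ≠ -k) (k : ℕ) :
    kummerCoeff a b (k + 1) =
      kummerCoeff (a + 1) b (k + 1) - 1 / b * kummerCoeff (a + 1) (b + 1) k := by
  have h0 : b ≠ 0 := by simpa using hb 0
  have hP := ascPochhammer_eval_ne_zero (add_one_ne_neg_natCast hb) k
  simp only [kummerCoeff]
  rw [ascPochhammer_succ_eval_left a, ascPochhammer_succ_eval_left b, ascPochhammer_succ_eval,
    Nat.factorial_succ]
  push_cast
  field_simp
  ring

lemma tendsto_kummerCoeff_ratio (a b : ℂ) :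
    Tendsto (fun k : ℕ => (a + k) / ((b + k) * (k + 1))) atTop (nhds 0) := by
  have h := (tendsto_add_mul_div_add_mul_atTop_nhds a b 1 (one_ne_zero (α := ℂ))).mul
    (tendsto_one_div_add_atTop_nhds_zero_nat (𝕜 := ℂ))
  rw [mul_zero] at h
  exact h.congr fun k => by rw [one_mul, div_mul_div_comm, mul_one]

lemma summable_norm_kummerCoeff_mul_pow (a b z : ℂ) :
    Summable fun k : ℕ => ‖kummerCoeff a b k * z ^ k‖ := by
  have hratio := ((tendsto_kummerCoeff_ratio a b).mul_const z).norm
  rw [zero_mul, norm_zero] at hratio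
  refine summable_of_ratio_norm_eventually_le (r := 1 / 2) (by norm_num) ?_
  filter_upwards [hratio.eventually_le_const one_half_pos] with k hk
  calc ‖‖kummerCoeff a b (k + 1) * z ^ (k + 1)‖‖
      = ‖(a + k) / ((b + k) * (k + 1)) * z‖ * ‖‖kummerCoeff a b k * z ^ k‖‖ := by
        rw [norm_norm, norm_norm, ← norm_mul, kummerCoeff_succ]
        ring_nf
    _ ≤ 1 / 2 * ‖‖kummerCoeff a b k * z ^ k‖‖ := by gcongr

lemma hasSum_kummerM (a b z : ℂ) :
    HasSum (fun k : ℕ => kummerCoeff a b k * z ^ k) (kummerM a b z) :=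
  (summable_norm_kummerCoeff_mul_pow a b z).of_norm.hasSum

lemma hasSum_kummerM_sub_one (a b z : ℂ) :
    HasSum (fun k : ℕ => kummerCoeff a b (k + 1) * z ^ (k + 1)) (kummerM a b z - 1) := by
  simpa [kummerCoeff] using (hasSum_nat_add_iff' 1).2 (hasSum_kummerM a b z)

lemma differentiable_kummerM (a b : ℂ) : Differentiable ℂ (kummerM a b) := by
  intro z
  have hball : DifferentiableOn ℂ (kummerM a b) (Metric.ball 0 (‖z‖ + 1)) := by
    refine Complex.differentiableOn_tsum_of_summable_norm
      (summable_norm_kummerCoeff_mul_pow a b ((‖z‖ + 1 : ℝ) : ℂ)) (fun k => by fun_prop)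
      Metric.isOpen_ball fun k w hw => ?_
    have hw' : ‖w‖ ≤ ‖z‖ + 1 := (mem_ball_zero_iff.1 hw).le
    rw [← kummerCoeff, norm_mul, norm_mul, norm_pow, norm_pow, Complex.norm_real,
      Real.norm_of_nonneg (by positivity)]
    gcongr
  exact hball.differentiableAt (Metric.isOpen_ball.mem_nhds (by simp))

lemma kummerM_eq_add_of_succ_right (hb : ∀ k : ℕ, b ≠ -k) (z : ℂ) :
    kummerM a b z =
      kummerM a (b + 1) z + a / (b * (b + 1)) * z * kummerM (a + 1) (b + 1 + 1) z := by
  have h := (hasSum_kummerM_sub_one a (b + 1) z).add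
    ((hasSum_kummerM (a + 1) (b + 1 + 1) z).mul_left (a / (b * (b + 1)) * z))
  have heq := (hasSum_kummerM_sub_one a b z).unique (h.congr_fun fun k => by
    rw [kummerCoeff_succ_eq_add hb]; ring)
  linear_combination heq

lemma kummerM_eq_add_of_succ_left (hb : ∀ k : ℕ, b ≠ -k) (z : ℂ) :
    kummerM a b z = kummerM (a + 1) b z + -(1 / b) * z * kummerM (a + 1) (b + 1) z := by
  have h := (hasSum_kummerM_sub_one (a + 1) b z).add
    ((hasSum_kummerM (a + 1) (b + 1) z).mul_left (-(1 / b) * z))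
  have heq := (hasSum_kummerM_sub_one a b z).unique (h.congr_fun fun k => by
    rw [kummerCoeff_succ_eq_sub hb]; ring)
  linear_combination heq

end Kummer

section EulerIntegral

variable {a c : ℂ}

lemma Gamma_add_natCast_of_re_pos (ha : 0 < a.re) (k : ℕ) :
    Complex.Gamma (a + k) = (ascPochhammer ℂ k).eval a * Complex.Gamma a := by
  rw [← Complex.Gamma_add_nat_div_Gamma_eq a (ne_neg_natCast_of_re_pos ha),
    div_mul_cancel₀ _ (Complex.Gamma_ne_zero_of_re_pos ha)]

lemma betaIntegral_ne_zero (ha : 0 < a.re) (hc : 0 < c.re) : Complex.betaIntegral a c ≠ 0 := by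
  rw [Complex.betaIntegral_eq_Gamma_mul_div a c ha hc]
  exact div_ne_zero (mul_ne_zero (Complex.Gamma_ne_zero_of_re_pos ha)
    (Complex.Gamma_ne_zero_of_re_pos hc)) (Complex.Gamma_ne_zero_of_re_pos (add_pos ha hc))

lemma betaIntegral_add_natCast (ha : 0 < a.re) (hc : 0 < c.re) (k : ℕ) :
    Complex.betaIntegral (a + k) c = Complex.betaIntegral a c *
      ((ascPochhammer ℂ k).eval a / (ascPochhammer ℂ k).eval (a + c)) := by
  have hac : 0 < (a + c).re := add_pos ha hc
  have hak : 0 < (a + k).re := by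
    rw [Complex.add_re, Complex.natCast_re]
    positivity
  have hΓ := Complex.Gamma_ne_zero_of_re_pos hac
  have hP := ascPochhammer_eval_ne_zero (ne_neg_natCast_of_re_pos hac) k
  rw [Complex.betaIntegral_eq_Gamma_mul_div _ _ hak hc,
    Complex.betaIntegral_eq_Gamma_mul_div _ _ ha hc, add_right_comm,
    Gamma_add_natCast_of_re_pos ha, Gamma_add_natCast_of_re_pos hac]
  field_simp

lemma hasSum_integral_exp_mul {w : ℝ → ℂ} (hw : IntervalIntegrable w volume 0 1) (z : ℂ) :
    HasSum (fun k : ℕ => ∫ x in (0 : ℝ)..1, (z * x) ^ k / (k.factorial : ℂ) * w x)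
      (∫ x in (0 : ℝ)..1, Complex.exp (z * x) * w x) := by
  have hwm : AEStronglyMeasurable w (volume.restrict (uIoc (0 : ℝ) 1)) :=
    (intervalIntegrable_iff.1 hw).aestronglyMeasurable
  refine intervalIntegral.hasSum_integral_of_dominated_convergence
    (fun k x => ‖z‖ ^ k / (k.factorial : ℝ) * ‖w x‖) (fun k => ?_) (fun k => ?_) ?_ ?_ ?_
  · exact (Continuous.aestronglyMeasurable (by fun_prop)).mul hwm
  · refine Eventually.of_forall fun x hx => ?_
    rw [uIoc_of_le zero_le_one] at hx
    rw [norm_mul, norm_div, norm_pow, norm_mul, Complex.norm_natCast, Complex.norm_real,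
      Real.norm_of_nonneg hx.1.le]
    have := mul_le_of_le_one_right (norm_nonneg z) hx.2
    have := hx.1.le
    gcongr
  · exact Eventually.of_forall fun x _ => (Real.summable_pow_div_factorial ‖z‖).mul_right ‖w x‖
  · simp only [tsum_mul_right]
    exact hw.norm.const_mul _
  · refine Eventually.of_forall fun x _ => HasSum.mul_right _ ?_
    rw [Complex.exp_eq_exp_ℂ]
    exact NormedSpace.expSeries_div_hasSum_exp (z * (x : ℂ))

lemma betaIntegral_mul_kummerM (ha : 0 < a.re) (hc : 0 < c.re) (z : ℂ) :
    Complex.betaIntegral a c * kummerM a (a + c) z =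
      ∫ x in (0 : ℝ)..1,
        Complex.exp (z * x) * ((x : ℂ) ^ (a - 1) * (1 - (x : ℂ)) ^ (c - 1)) := by
  refine HasSum.unique (((hasSum_kummerM a (a + c) z).mul_left _).congr_fun fun k => ?_)
    (hasSum_integral_exp_mul (Complex.betaIntegral_convergent ha hc) z)
  have hterm : Complex.betaIntegral a c * (kummerCoeff a (a + c) k * z ^ k) =
      z ^ k / (k.factorial : ℂ) * Complex.betaIntegral (a + k) c := by
    rw [betaIntegral_add_natCast ha hc, kummerCoeff, ← div_div]
    ring
  rw [hterm, Complex.betaIntegral, ← intervalIntegral.integral_const_mul]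
  refine intervalIntegral.integral_congr_ae (Eventually.of_forall fun x hx => ?_)
  rw [uIoc_of_le zero_le_one] at hx
  have hx0 : (x : ℂ) ≠ 0 := by exact_mod_cast hx.1.ne'
  rw [add_sub_right_comm, Complex.cpow_add _ _ hx0, Complex.cpow_natCast]
  ring

end EulerIntegral

namespace HasKummerGrowth

variable {f g : ℂ → ℂ}

lemma add (hf : HasKummerGrowth f) (hg : HasKummerGrowth g) :
    HasKummerGrowth fun z => f z + g z := by
  obtain ⟨C, K, hf⟩ := hf
  obtain ⟨D, L, hg⟩ := hg
  have hC : 0 ≤ C := by simpa using (norm_nonneg _).trans (hf 0)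
  have hD : 0 ≤ D := by simpa using (norm_nonneg _).trans (hg 0)
  refine ⟨C + D, max K L, fun z => ?_⟩
  have hz : 1 ≤ 1 + ‖z‖ := by linarith [norm_nonneg z]
  calc ‖f z + g z‖
      ≤ C * (1 + ‖z‖) ^ K * max 1 (rexp z.re) + D * (1 + ‖z‖) ^ L * max 1 (rexp z.re) :=
        (norm_add_le _ _).trans (add_le_add (hf z) (hg z))
    _ ≤ C * (1 + ‖z‖) ^ max K L * max 1 (rexp z.re) +
          D * (1 + ‖z‖) ^ max K L * max 1 (rexp z.re) := by
        gcongr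
        exacts [le_max_left K L, le_max_right K L]
    _ = (C + D) * (1 + ‖z‖) ^ max K L * max 1 (rexp z.re) := by ring

lemma linear_mul (hf : HasKummerGrowth f) (d : ℂ) : HasKummerGrowth fun z => d * z * f z := by
  obtain ⟨C, K, hf⟩ := hf
  refine ⟨‖d‖ * C, K + 1, fun z => ?_⟩
  calc ‖d * z * f z‖
      ≤ ‖d‖ * (1 + ‖z‖) * (C * (1 + ‖z‖) ^ K * max 1 (rexp z.re)) := by
        rw [norm_mul, norm_mul]
        gcongr
        exacts [by linarith, hf z]
    _ = ‖d‖ * C * (1 + ‖z‖) ^ (K + 1) * max 1 (rexp z.re) := by ring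

end HasKummerGrowth

section KummerGrowth

lemma exp_mul_le_max_one_exp {x t : ℝ} (ht : t ∈ Icc (0 : ℝ) 1) :
    rexp (x * t) ≤ max 1 (rexp x) := by
  rcases le_total x 0 with hx | hx
  · exact le_max_of_le_left (Real.exp_le_one_iff.2 (mul_nonpos_of_nonpos_of_nonneg hx ht.1))
  · exact le_max_of_le_right (Real.exp_le_exp.2 (mul_le_of_le_one_right hx ht.2))

lemma hasKummerGrowth_kummerM_of_re_lt {a b : ℂ} (ha : 0 < a.re) (hab : a.re < b.re) :
    HasKummerGrowth (kummerM a b) := by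
  obtain ⟨c, rfl⟩ : ∃ c, b = a + c := ⟨b - a, by ring⟩
  have hc : 0 < c.re := by simpa using hab
  have hB := norm_pos_iff.2 (betaIntegral_ne_zero ha hc)
  have hw := Complex.betaIntegral_convergent ha hc
  set w : ℝ → ℂ := fun x => (x : ℂ) ^ (a - 1) * (1 - (x : ℂ)) ^ (c - 1)
  refine ⟨(∫ x in (0 : ℝ)..1, ‖w x‖) / ‖Complex.betaIntegral a c‖, 0, fun z => ?_⟩
  rw [pow_zero, mul_one, div_mul_eq_mul_div, le_div_iff₀ hB, ← norm_mul, mul_comm (kummerM _ _ _),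
    betaIntegral_mul_kummerM ha hc, ← intervalIntegral.integral_mul_const]
  refine intervalIntegral.norm_integral_le_of_norm_le zero_le_one
    (Eventually.of_forall fun x hx => ?_) (hw.norm.mul_const _)
  rw [norm_mul, Complex.norm_exp, Complex.re_mul_ofReal, mul_comm]
  gcongr
  exact exp_mul_le_max_one_exp ⟨hx.1.le, hx.2⟩

lemma hasKummerGrowth_kummerM_of_re_pos {a b : ℂ} (ha : 0 < a.re) (hb : ∀ k : ℕ, b ≠ -k) :
    HasKummerGrowth (kummerM a b) := by
  obtain ⟨n, hn⟩ := exists_nat_gt (a.re - b.re)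
  induction n generalizing a b with
  | zero => exact hasKummerGrowth_kummerM_of_re_lt ha (by simpa using hn)
  | succ n ih =>
    have hb' := add_one_ne_neg_natCast hb
    push_cast at hn
    have h₁ : HasKummerGrowth (kummerM a (b + 1)) := ih ha hb' (by simp; linarith)
    have h₂ : HasKummerGrowth (kummerM (a + 1) (b + 1 + 1)) :=
      ih (by simp; linarith) (add_one_ne_neg_natCast hb') (by simp; linarith)
    rw [funext (kummerM_eq_add_of_succ_right hb)]
    exact h₁.add (h₂.linear_mul _)

lemma hasKummerGrowth_kummerM {a b : ℂ} (hb : ∀ k : ℕ, b ≠ -k) :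
    HasKummerGrowth (kummerM a b) := by
  obtain ⟨n, hn⟩ := exists_nat_gt (-a.re)
  induction n generalizing a b with
  | zero => exact hasKummerGrowth_kummerM_of_re_pos (by simpa using hn) hb
  | succ n ih =>
    push_cast at hn
    have ha' : -(a + 1).re < n := by simp; linarith
    rw [funext (kummerM_eq_add_of_succ_left hb)]
    exact (ih hb ha').add ((ih (add_one_ne_neg_natCast hb) ha').linear_mul _)

end KummerGrowth

/-! ### Taylor expansion of `f₂` -/

section CscSeries

variable {z : ℂ}

lemma mem_integerComplement_of_norm_lt_one (h0 : z ≠ 0) (h1 : ‖z‖ < 1) :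
    z ∈ Complex.integerComplement := by
  rw [Complex.mem_integerComplement_iff]
  rintro ⟨n, rfl⟩
  rw [Complex.norm_intCast] at h1
  have hn : n = 0 := Int.abs_lt_one_iff.1 (by exact_mod_cast h1)
  exact h0 (by simp [hn])

lemma hasSum_riemannZeta_two_mul_succ (k : ℕ) :
    HasSum (fun n : ℕ => (((n : ℂ) + 1) ^ (2 * (k + 1)))⁻¹)
      (riemannZeta (2 * ((k + 1 : ℕ) : ℂ))) := by
  have hs : Summable fun n : ℕ => 1 / (n : ℂ) ^ (2 * (k + 1)) :=
    .of_norm (by simpa using Real.summable_one_div_nat_pow.2 (by omega : 1 < 2 * (k + 1)))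
  have hζ := zeta_nat_eq_tsum_of_gt_one (k := 2 * (k + 1)) (by omega)
  have hsum := (hasSum_nat_add_iff' 1).2 hs.hasSum
  rw [← hζ] at hsum
  simpa using hsum

lemma hasSum_mul_cotTerm (h0 : z ≠ 0) (h1 : ‖z‖ < 1) :
    HasSum (fun n => z * cotTerm z n) (π * z * Complex.cot (π * z) - 1) := by
  have hz := mem_integerComplement_of_norm_lt_one h0 h1
  have hsum := (summable_cotTerm hz).hasSum.mul_left z
  rw [← cot_series_rep' hz] at hsum
  convert! hsum using 1
  field_simp

lemma hasSum_mul_cotTerm_geometric (h0 : z ≠ 0) (h1 : ‖z‖ < 1) (n : ℕ) :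
    HasSum (fun k : ℕ => -2 * z ^ (2 * (k + 1)) * (((n : ℂ) + 1) ^ (2 * (k + 1)))⁻¹)
      (z * cotTerm z n) := by
  have hn : (n : ℂ) + 1 ≠ 0 := n.cast_add_one_ne_zero
  have hn1 : 1 ≤ ‖(n : ℂ) + 1‖ := by
    rw [← Nat.cast_succ, Complex.norm_natCast]
    exact_mod_cast n.succ_pos
  have hw : ‖(z / (n + 1)) ^ 2‖ < 1 := by
    rw [norm_pow, norm_div]
    exact pow_lt_one₀ (by positivity) ((div_le_self (norm_nonneg z) hn1).trans_lt h1) two_ne_zero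
  have hw1 : 1 - (z / (n + 1)) ^ 2 ≠ 0 := fun h => by
    rw [← sub_eq_zero.1 h, norm_one] at hw
    exact hw.false
  have hval : z * cotTerm z n = -2 * (z / (n + 1)) ^ 2 * (1 - (z / (n + 1)) ^ 2)⁻¹ := by
    have hne : ((n : ℂ) + 1) ^ 2 - z ^ 2 ≠ 0 := by
      intro h
      apply hw1
      rw [div_pow, ← sub_eq_zero.1 h, div_self (pow_ne_zero 2 hn), sub_self]
    have hfac : (z + (n + 1)) * (z - (n + 1)) = -(((n : ℂ) + 1) ^ 2 - z ^ 2) := by ring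
    rw [cotTerm_identity (mem_integerComplement_of_norm_lt_one h0 h1), hfac, div_pow,
      one_sub_div (pow_ne_zero 2 hn)]
    field_simp
  rw [hval]
  refine ((hasSum_geometric_of_norm_lt_one hw).mul_left _).congr_fun fun k => ?_
  rw [← pow_mul, div_pow, div_pow]
  field_simp
  ring

lemma summable_cot_double_series (h1 : ‖z‖ < 1) :
    Summable fun p : ℕ × ℕ =>
      -2 * z ^ (2 * (p.2 + 1)) * (((p.1 : ℂ) + 1) ^ (2 * (p.2 + 1)))⁻¹ := by
  have hn : Summable fun n : ℕ => 1 / ((n : ℝ) + 1) ^ 2 := by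
    simpa using (summable_nat_add_iff 1).2 (Real.summable_one_div_nat_pow.2 one_lt_two)
  have hk : Summable fun k : ℕ => 2 * ‖z‖ ^ (k + 1) :=
    ((summable_nat_add_iff 1).2 (summable_geometric_of_lt_one (norm_nonneg z) h1)).mul_left 2
  refine Summable.of_norm_bounded (hn.mul_of_nonneg hk (fun n => by positivity)
    fun k => by positivity) fun ⟨n, k⟩ => ?_
  have hn1 : (1 : ℝ) ≤ (n : ℝ) + 1 := by linarith [n.cast_nonneg (α := ℝ)]
  have hnorm : ‖(n : ℂ) + 1‖ = (n : ℝ) + 1 := by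
    rw [← Nat.cast_succ, Complex.norm_natCast, Nat.cast_succ]
  simp only [norm_mul, norm_inv, norm_pow, norm_neg, Complex.norm_ofNat, hnorm]
  rw [mul_comm (1 / _), ← div_eq_mul_inv, mul_one_div]
  gcongr 2 * ?_ / ?_
  · exact pow_le_pow_of_le_one (norm_nonneg z) h1.le (by omega)
  · exact pow_le_pow_right₀ hn1 (by omega)

lemma hasSum_of_hasSum_rows_of_hasSum_cols {F : ℕ × ℕ → ℂ} {r c : ℕ → ℂ} {R : ℂ}
    (hF : Summable F) (hrow : ∀ n, HasSum (fun k => F (n, k)) (r n)) (hr : HasSum r R)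
    (hcol : ∀ k, HasSum (fun n => F (n, k)) (c k)) : HasSum c R := by
  rw [← (hF.hasSum.prod_fiberwise hrow).unique hr]
  exact ((Equiv.prodComm ℕ ℕ).hasSum_iff.2 hF.hasSum).prod_fiberwise hcol

lemma hasSum_mul_cot (h0 : z ≠ 0) (h1 : ‖z‖ < 1) :
    HasSum (fun k : ℕ => -2 * z ^ (2 * (k + 1)) * riemannZeta (2 * ((k + 1 : ℕ) : ℂ)))
      (π * z * Complex.cot (π * z) - 1) :=
  hasSum_of_hasSum_rows_of_hasSum_cols (summable_cot_double_series h1)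
    (hasSum_mul_cotTerm_geometric h0 h1) (hasSum_mul_cotTerm h0 h1)
    fun k => (hasSum_riemannZeta_two_mul_succ k).mul_left (-2 * z ^ (2 * (k + 1)))

lemma mul_div_sin_eq_cot_sub_cot {x : ℂ} (hx : Complex.sin (2 * x) ≠ 0) :
    2 * x / Complex.sin (2 * x) = 2 * (x * Complex.cot x) - 2 * x * Complex.cot (2 * x) := by
  rw [Complex.cot_eq_cos_div_sin, Complex.cot_eq_cos_div_sin, Complex.cos_two_mul]
  rw [Complex.sin_two_mul] at hx ⊢
  have hs : Complex.sin x ≠ 0 := fun h => by simp [h] at hx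
  have hc : Complex.cos x ≠ 0 := fun h => by simp [h] at hx
  field_simp
  ring

lemma hasSum_mul_div_sin (h0 : z ≠ 0) (h1 : ‖z‖ < 1) :
    HasSum (fun j : ℕ => tau2 j * z ^ (2 * j)) (π * z / Complex.sin (π * z)) := by
  have hhalf : ‖z / 2‖ < 1 := by
    rw [norm_div, Complex.norm_ofNat]
    linarith [norm_nonneg z]
  have hsin := sin_pi_mul_ne_zero (mem_integerComplement_of_norm_lt_one h0 h1)
  have hcsc := mul_div_sin_eq_cot_sub_cot (x := π * (z / 2))
    (by rwa [mul_left_comm, mul_div_cancel₀ z two_ne_zero])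
  rw [mul_left_comm, mul_div_cancel₀ z two_ne_zero] at hcsc
  refine (hasSum_nat_add_iff' 1).1 ?_
  have hsum := ((hasSum_mul_cot (div_ne_zero h0 two_ne_zero) hhalf).mul_left 2).sub
    (hasSum_mul_cot h0 h1)
  convert! hsum using 1
  · funext j
    have hpow : (2 : ℂ) ^ (1 - 2 * ((j + 1 : ℕ) : ℤ)) = 2 / 2 ^ (2 * (j + 1)) := by
      rw [zpow_sub₀ two_ne_zero, zpow_one]
      norm_cast
    rw [tau2, if_neg j.succ_ne_zero, hpow, div_pow]
    ring
  · simp only [hcsc, range_one, sum_singleton, tau2, if_true, mul_zero, pow_zero]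
    ring

end CscSeries

section PowerSeries

variable {f : ℂ → ℂ} {a : ℕ → ℂ}

lemma hasSum_even_mul {t m : ℕ → ℂ} {s A B : ℂ} (hA : HasSum (fun j => t j * s ^ (2 * j)) A)
    (hB : HasSum (fun k => m k * s ^ k) B) :
    HasSum (fun n => (∑ j ∈ Finset.range (n / 2 + 1), t j * m (n - 2 * j)) * s ^ n) (A * B) := by
  have hAB := hA.mul hB (summable_mul_of_summable_norm
    (f := fun j => t j * s ^ (2 * j)) (g := fun k => m k * s ^ k) hA.summable.norm hB.summable.norm)
  refine (hAB.tsum_fiberwise fun p => 2 * p.1 + p.2).congr_fun fun n => ?_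
  have hfiber : (fun p : ℕ × ℕ => 2 * p.1 + p.2) ⁻¹' {n} =
      ((Finset.range (n / 2 + 1)).image fun j => (j, n - 2 * j) : Finset (ℕ × ℕ)) := by
    ext ⟨j, k⟩
    simp only [Set.mem_preimage, Set.mem_singleton_iff, coe_image, coe_range, Set.mem_image,
      Set.mem_Iio, Prod.mk.injEq]
    constructor
    · rintro rfl
      exact ⟨j, by omega, rfl, by omega⟩
    · rintro ⟨i, hi, rfl, rfl⟩
      omega
  rw [hfiber, Finset.tsum_subtype' _ fun p : ℕ × ℕ => t p.1 * s ^ (2 * p.1) * (m p.2 * s ^ p.2),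
    Finset.sum_image fun i _ j _ h => congrArg Prod.fst h, Finset.sum_mul]
  refine Finset.sum_congr rfl fun j hj => ?_
  have hn : n = 2 * j + (n - 2 * j) := by have := Finset.mem_range.1 hj; omega
  conv_lhs => rw [hn, pow_add, ← hn]
  ring

lemma isBigO_sub_sum_range_of_hasSum {ρ : ℝ} (hρ : 0 < ρ)
    (h : ∀ s : ℂ, s ≠ 0 → ‖s‖ < ρ → HasSum (fun n => a n * s ^ n) (f s)) (N : ℕ) :
    (fun s => f s - ∑ n ∈ Finset.range N, a n * s ^ n) =O[nhdsWithin 0 {0}ᶜ] fun s => s ^ N := by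
  have hρ' : ‖((ρ / 2 : ℝ) : ℂ)‖ = ρ / 2 := by
    rw [Complex.norm_real, Real.norm_of_nonneg (by positivity)]
  have hsum := (summable_nat_add_iff N).2 (h ((ρ / 2 : ℝ) : ℂ)
    (by exact_mod_cast (half_pos hρ).ne') (by rw [hρ']; exact half_lt_self hρ)).summable.norm
  refine IsBigO.of_bound ((∑' n, ‖a (n + N) * ((ρ / 2 : ℝ) : ℂ) ^ (n + N)‖) / (ρ / 2) ^ N) ?_
  filter_upwards [self_mem_nhdsWithin,
    nhdsWithin_le_nhds (Metric.ball_mem_nhds (0 : ℂ) (half_pos hρ))] with s hs0 hs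
  have hs' : ‖s‖ < ρ / 2 := mem_ball_zero_iff.1 hs
  have htail := (hasSum_nat_add_iff' N).2 (h s hs0 (hs'.trans (half_lt_self hρ)))
  rw [← htail.tsum_eq, norm_pow, div_mul_eq_mul_div, mul_div_assoc, ← div_pow]
  refine tsum_of_norm_bounded (hsum.hasSum.mul_right _) fun n => ?_
  rw [norm_mul, norm_mul, norm_pow, norm_pow, hρ', pow_add, pow_add, div_pow ‖s‖ _ N]
  calc ‖a (n + N)‖ * (‖s‖ ^ n * ‖s‖ ^ N)
      ≤ ‖a (n + N)‖ * ((ρ / 2) ^ n * ‖s‖ ^ N) := by gcongr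
    _ = ‖a (n + N)‖ * ((ρ / 2) ^ n * (ρ / 2) ^ N) * (‖s‖ ^ N / (ρ / 2) ^ N) := by field_simp

end PowerSeries

lemma hasSum_f2 (q β : ℝ) {s : ℂ} (h0 : s ≠ 0) (h1 : ‖s‖ < 1) :
    HasSum (fun n => acoef q β n * s ^ n) (f2 q β s) := by
  have hM : HasSum (fun k => kummerCoeff (-1 / 2) (-(q : ℂ) - 1 / 2) k * (2 / (β : ℂ)) ^ k * s ^ k)
      (kummerM (-1 / 2) (-(q : ℂ) - 1 / 2) (2 * s / (β : ℂ))) :=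
    (hasSum_kummerM _ _ _).congr_fun fun k => by
      rw [mul_assoc, ← mul_pow, div_mul_eq_mul_div]
  refine (hasSum_even_mul (hasSum_mul_div_sin h0 h1) hM).congr_fun fun n => ?_
  congr 1
  refine Finset.sum_congr rfl fun j _ => ?_
  rw [kummerCoeff]
  ring

/-! ### Decay in vertical strips -/

section SlitStrip

variable {R τ x y : ℝ} {f g : ℂ → ℂ} {s : ℂ}

/-- The strip `|re s| < R` without the branch cut `(-∞, 0]` of the complex powers. -/
def slitStrip (R : ℝ) : Set ℂ := {s | s ∈ Complex.slitPlane ∧ |s.re| < R}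

/-- The part of the strip `|re s| < R` at height at least `τ` above or below the real axis. -/
def farStrip (R τ : ℝ) : Set ℂ := {s | |s.re| < R ∧ τ ≤ |s.im|}

/-- Away from the real axis, `g` is bounded by some power of `‖s‖` in the strip `|re s| < R`. -/
def ModerateGrowth (R : ℝ) (g : ℂ → ℂ) : Prop :=
  ∀ τ > 0, ∃ x : ℝ, g =O[𝓟 (farStrip R τ)] fun s => ‖s‖ ^ x

/-- Away from the real axis, `f` is smaller than every power of `‖s‖` in the strip
`|re s| < R`. -/
def RapidDecay (R : ℝ) (f : ℂ → ℂ) : Prop :=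
  ∀ τ > 0, ∀ x : ℝ, f =O[𝓟 (farStrip R τ)] fun s => ‖s‖ ^ x

lemma isOpen_slitStrip (R : ℝ) : IsOpen (slitStrip R) :=
  Complex.isOpen_slitPlane.inter
    (isOpen_lt (continuous_abs.comp Complex.continuous_re) continuous_const)

lemma mem_slitStrip_of_re_pos (h0 : 0 < s.re) (hR : s.re < R) : s ∈ slitStrip R :=
  ⟨Or.inl h0, by rwa [abs_of_pos h0]⟩

lemma farStrip_subset_slitStrip (hτ : 0 < τ) : farStrip R τ ⊆ slitStrip R :=
  fun _ hs => ⟨Or.inr (abs_pos.1 (hτ.trans_le hs.2)), hs.1⟩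

lemma le_norm_of_mem_farStrip (hs : s ∈ farStrip R τ) : τ ≤ ‖s‖ :=
  hs.2.trans (Complex.abs_im_le_norm s)

lemma isBigO_norm_rpow_farStrip (hτ : 0 < τ) (h : x ≤ y) :
    (fun s : ℂ => ‖s‖ ^ x) =O[𝓟 (farStrip R τ)] fun s => ‖s‖ ^ y := by
  refine isBigO_principal.2 ⟨τ ^ (x - y), fun s hs => ?_⟩
  have hτs := le_norm_of_mem_farStrip hs
  have hs0 := hτ.trans_le hτs
  rw [norm_of_nonneg (by positivity), norm_of_nonneg (by positivity)]
  calc ‖s‖ ^ x = ‖s‖ ^ (x - y) * ‖s‖ ^ y := by rw [← rpow_add hs0, sub_add_cancel]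
    _ ≤ τ ^ (x - y) * ‖s‖ ^ y := by
      exact mul_le_mul_of_nonneg_right (rpow_le_rpow_of_nonpos hτ hτs (sub_nonpos.2 h))
        (by positivity)

lemma isBigO_norm_rpow_mul_farStrip (hτ : 0 < τ) :
    (fun s : ℂ => ‖s‖ ^ x * ‖s‖ ^ y) =O[𝓟 (farStrip R τ)] fun s => ‖s‖ ^ (x + y) :=
  isBigO_principal.2 ⟨1, fun s hs => by
    rw [rpow_add (hτ.trans_le (le_norm_of_mem_farStrip hs)), one_mul]⟩

lemma moderateGrowth_cpow_ofReal (R x : ℝ) : ModerateGrowth R fun s => s ^ (x : ℂ) :=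
  fun _ _ => ⟨x, .of_norm_le fun s => (Complex.norm_cpow_real s x).le⟩

lemma moderateGrowth_exp_mul (R η : ℝ) : ModerateGrowth R fun s => Complex.exp (η * s) := by
  refine fun _ _ => ⟨0, isBigO_principal.2 ⟨rexp (|η| * R), fun s hs => ?_⟩⟩
  rw [Complex.norm_exp, rpow_zero, norm_one, mul_one, Complex.re_ofReal_mul]
  have hηs : η * s.re ≤ |η| * |s.re| := (le_abs_self _).trans (abs_mul _ _).le
  exact exp_le_exp.2 (hηs.trans (mul_le_mul_of_nonneg_left hs.1.le (abs_nonneg η)))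

lemma RapidDecay.mul (hf : RapidDecay R f) (hg : ModerateGrowth R g) :
    RapidDecay R fun s => f s * g s := by
  intro τ hτ x
  obtain ⟨y, hy⟩ := hg τ hτ
  have hmul := ((hf τ hτ (x - y)).mul hy).trans (isBigO_norm_rpow_mul_farStrip hτ)
  rwa [sub_add_cancel] at hmul

lemma rapidDecay_of_isBigO_exp {a : ℝ} (ha : 0 < a)
    (hf : ∀ τ > 0, f =O[𝓟 (farStrip R τ)] fun s => rexp (-(a * |s.im|))) : RapidDecay R f := by
  intro τ hτ x
  obtain ⟨n, hn⟩ := exists_nat_ge (-x)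
  refine ((hf τ hτ).trans (isBigO_principal.2 ⟨rexp (a * R) * (n.factorial / a ^ n),
    fun s hs => ?_⟩)).trans (isBigO_norm_rpow_farStrip hτ (neg_le.1 hn))
  have hs0 := hτ.trans_le (le_norm_of_mem_farStrip hs)
  have him : ‖s‖ - R ≤ |s.im| := by
    linarith [Complex.norm_le_abs_re_add_abs_im s, hs.1]
  have hexp : rexp (-(a * ‖s‖)) ≤ n.factorial / (a * ‖s‖) ^ n := by
    rw [Real.exp_neg, ← inv_div]
    exact inv_anti₀ (by positivity) (pow_div_factorial_le_exp _ (by positivity) n)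
  rw [norm_of_nonneg (by positivity), norm_of_nonneg (by positivity), rpow_neg (by positivity),
    rpow_natCast]
  calc rexp (-(a * |s.im|)) ≤ rexp (a * R + -(a * ‖s‖)) := by gcongr; nlinarith
    _ ≤ rexp (a * R) * (n.factorial / (a * ‖s‖) ^ n) := by rw [Real.exp_add]; gcongr
    _ = rexp (a * R) * (n.factorial / a ^ n) * (‖s‖ ^ n)⁻¹ := by rw [mul_pow]; field_simp

end SlitStrip

section CauchyEstimates

variable {R R' ρ A x : ℝ} {f : ℂ → ℂ} {s : ℂ}

lemma differentiableOn_iteratedDeriv {U : Set ℂ} (hf : DifferentiableOn ℂ f U) (hU : IsOpen U)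
    (k : ℕ) : DifferentiableOn ℂ (iteratedDeriv k f) U := by
  induction k with
  | zero => rwa [iteratedDeriv_zero]
  | succ k ih => rw [iteratedDeriv_succ]; exact ih.deriv hU

lemma rpow_le_two_rpow_abs_mul_rpow {a b : ℝ} (ha : 0 < a) (hab : a / 2 ≤ b) (hba : b ≤ 2 * a) :
    b ^ x ≤ 2 ^ |x| * a ^ x := by
  have hb : 0 < b := (half_pos ha).trans_le hab
  rcases le_total 0 x with hx | hx
  · rw [abs_of_nonneg hx, ← mul_rpow zero_le_two ha.le]
    gcongr
  · calc b ^ x ≤ (a / 2) ^ x := rpow_le_rpow_of_nonpos (half_pos ha) hab hx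
      _ = 2 ^ |x| * a ^ x := by
        rw [abs_of_nonpos hx, div_rpow ha.le zero_le_two, rpow_neg zero_le_two, div_eq_inv_mul]

lemma norm_iteratedDeriv_le_of_norm_le_rpow (hρ : 0 < ρ) (hρs : ρ ≤ ‖s‖ / 2) (hA : 0 ≤ A)
    (hd : DifferentiableOn ℂ f (Metric.closedBall s ρ))
    (hf : ∀ w ∈ Metric.closedBall s ρ, ‖f w‖ ≤ A * ‖w‖ ^ x) (k : ℕ) :
    ‖iteratedDeriv k f s‖ ≤ k.factorial * (A * 2 ^ |x|) * ‖s‖ ^ x / ρ ^ k := by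
  rw [mul_assoc]
  refine Complex.norm_iteratedDeriv_le_of_forall_mem_sphere_norm_le k hρ
    (hd.diffContOnCl_ball subset_rfl) fun w hw => ?_
  have hws : ‖w - s‖ = ρ := mem_sphere_iff_norm.1 hw
  have hs0 : 0 < ‖s‖ := by linarith
  have hsw : ‖s‖ ≤ ‖w - s‖ + ‖w‖ := by simpa using norm_sub_le (w - s) w
  have hws' : ‖w‖ ≤ ‖w - s‖ + ‖s‖ := by simpa using norm_add_le (w - s) s
  refine (hf w (Metric.sphere_subset_closedBall hw)).trans ?_
  rw [mul_assoc]
  gcongr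
  exact rpow_le_two_rpow_abs_mul_rpow hs0 (by linarith) (by linarith)

lemma rapidDecay_iteratedDeriv (hf : RapidDecay R f) (hd : DifferentiableOn ℂ f (slitStrip R))
    (hR : R' < R) (k : ℕ) : RapidDecay R' (iteratedDeriv k f) := by
  intro τ hτ x
  obtain ⟨A, hA, hfA⟩ := (hf (τ / 2) (half_pos hτ) x).exists_nonneg
  rw [isBigOWith_principal] at hfA
  set ρ := min (R - R') (τ / 2)
  have hρ : 0 < ρ := lt_min (sub_pos.2 hR) (half_pos hτ)
  refine isBigO_principal.2 ⟨k.factorial * (A * 2 ^ |x|) / ρ ^ k, fun s hs => ?_⟩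
  have hball : Metric.closedBall s ρ ⊆ farStrip R (τ / 2) := fun w hw => by
    rw [mem_closedBall_iff_norm] at hw
    have hre := (Complex.abs_re_le_norm (w - s)).trans hw
    have him := (Complex.abs_im_le_norm (w - s)).trans hw
    rw [Complex.sub_re] at hre
    rw [Complex.sub_im, abs_sub_comm] at him
    exact ⟨by linarith [abs_sub_abs_le_abs_sub w.re s.re, min_le_left (R - R') (τ / 2), hs.1],
      by linarith [abs_sub_abs_le_abs_sub s.im w.im, min_le_right (R - R') (τ / 2), hs.2]⟩
  have hρs : ρ ≤ ‖s‖ / 2 := by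
    linarith [min_le_right (R - R') (τ / 2), le_norm_of_mem_farStrip hs]
  refine (norm_iteratedDeriv_le_of_norm_le_rpow hρ hρs hA
    (hd.mono (hball.trans (farStrip_subset_slitStrip (half_pos hτ))))
    (fun w hw => by simpa [abs_of_nonneg, rpow_nonneg] using hfA w (hball hw)) k).trans_eq ?_
  rw [norm_of_nonneg (by positivity)]
  ring

lemma mem_slitPlane_of_norm_sub_lt {w : ℂ} (hs : 0 < s.re) (hw : ‖w - s‖ < ‖s‖) :
    w ∈ Complex.slitPlane := by
  by_contra hmem
  rw [Complex.mem_slitPlane_iff, not_or, not_lt, not_not] at hmem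
  rw [← sq_lt_sq₀ (norm_nonneg _) (norm_nonneg _), ← Complex.normSq_eq_norm_sq,
    ← Complex.normSq_eq_norm_sq, Complex.normSq_apply, Complex.normSq_apply, Complex.sub_re,
    Complex.sub_im, hmem.2] at hw
  nlinarith [hmem.1]

lemma isBigO_iteratedDeriv_nhdsWithin_zero (hR : 0 < R)
    (hd : DifferentiableOn ℂ f (slitStrip R))
    (hf : f =O[nhdsWithin 0 Complex.slitPlane] fun s => ‖s‖ ^ x) (k : ℕ) :
    iteratedDeriv k f =O[nhdsWithin 0 {s : ℂ | 0 < s.re}] fun s => ‖s‖ ^ (x - k) := by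
  obtain ⟨A, hA, hfA⟩ := hf.exists_nonneg
  rw [isBigOWith_iff, eventually_nhdsWithin_iff, Metric.eventually_nhds_iff] at hfA
  obtain ⟨δ, hδ, hfδ⟩ := hfA
  refine .of_bound (k.factorial * (A * 2 ^ |x|) * 2 ^ k) ?_
  filter_upwards [self_mem_nhdsWithin, nhdsWithin_le_nhds
    (Metric.ball_mem_nhds (0 : ℂ) (half_pos (lt_min hδ hR)))] with s hs hsδ
  have hs0 : 0 < ‖s‖ := norm_pos_iff.2 (Complex.slitPlane_ne_zero (Or.inl hs))
  rw [mem_ball_zero_iff, lt_div_iff₀' zero_lt_two, lt_min_iff] at hsδ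
  have hball : ∀ w ∈ Metric.closedBall s (‖s‖ / 2), w ∈ Complex.slitPlane ∧ ‖w‖ < 2 * ‖s‖ := by
    intro w hw
    rw [mem_closedBall_iff_norm] at hw
    have hws : ‖w‖ ≤ ‖w - s‖ + ‖s‖ := by simpa using norm_add_le (w - s) s
    exact ⟨mem_slitPlane_of_norm_sub_lt hs (by linarith), by linarith⟩
  have hfball : ∀ w ∈ Metric.closedBall s (‖s‖ / 2), ‖f w‖ ≤ A * ‖w‖ ^ x := fun w hw => by
    simpa [abs_of_nonneg, rpow_nonneg] using
      hfδ (by simpa using (hball w hw).2.trans hsδ.1) (hball w hw).1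
  refine (norm_iteratedDeriv_le_of_norm_le_rpow (half_pos hs0) le_rfl hA
    (hd.mono fun w hw => ⟨(hball w hw).1, (Complex.abs_re_le_norm w).trans_lt
      ((hball w hw).2.trans hsδ.2)⟩) hfball k).trans_eq ?_
  rw [norm_of_nonneg (by positivity), rpow_sub_natCast hs0.ne', div_pow]
  field_simp

end CauchyEstimates

/-! ### The Bromwich integral -/

section LaplaceInversion

variable {p σ η : ℝ} {z : ℂ}

lemma integrableOn_rpow_sub_one_mul_exp {a : ℝ} (hp : 0 < p) (ha : a < 0) :
    IntegrableOn (fun x : ℝ => x ^ (p - 1) * rexp (a * x)) (Set.Ioi 0) := by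
  simpa using integrableOn_rpow_mul_exp_neg_mul_rpow (p := 1) (s := p - 1) (by linarith) one_pos
    (neg_pos.2 ha)

lemma integrableOn_rpow_smul_exp_neg_ofReal_mul (hp : 0 < p) (hσ : 0 < σ) :
    IntegrableOn (fun x : ℝ => x ^ (p - 1) • Complex.exp (-σ * x)) (Set.Ioi 0) := by
  refine (integrableOn_rpow_sub_one_mul_exp hp (neg_neg_iff_pos.2 hσ)).mono' (by fun_prop) ?_
  filter_upwards [ae_restrict_mem measurableSet_Ioi] with x hx
  rw [norm_smul, norm_of_nonneg (rpow_nonneg (le_of_lt hx) _), Complex.norm_exp]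
  simp

lemma differentiableOn_integral_rpow_mul_exp (hp : 0 < p) :
    DifferentiableOn ℂ
      (fun z : ℂ => ∫ x in Set.Ioi (0 : ℝ), x ^ (p - 1) • Complex.exp (-z * x))
      {z | 0 < z.re} := by
  set w : ℝ → ENNReal := fun x => ENNReal.ofReal (x ^ (p - 1))
  have hw : Measurable w := by fun_prop
  have hw_top : ∀ᵐ x ∂volume.restrict (Set.Ioi (0 : ℝ)), w x < ⊤ := by simp [w]
  have hw_eq : ∀ x ∈ Set.Ioi (0 : ℝ), (w x).toReal = x ^ (p - 1) := fun x hx =>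
    ENNReal.toReal_ofReal (rpow_nonneg (le_of_lt hx) _)
  set μ := (volume.restrict (Set.Ioi (0 : ℝ))).withDensity w
  have hexp : Set.Iio 0 ⊆ ProbabilityTheory.integrableExpSet id μ := fun a ha =>
    (integrable_withDensity_iff_integrable_smul' hw hw_top).2
      ((integrableOn_rpow_sub_one_mul_exp hp ha).congr_fun
        (fun x hx => by simp [hw_eq x hx]) measurableSet_Ioi)
  have hmgf : ∀ z, ProbabilityTheory.complexMGF id μ (-z) =
      ∫ x in Set.Ioi (0 : ℝ), x ^ (p - 1) • Complex.exp (-z * x) := fun z => by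
    rw [ProbabilityTheory.complexMGF, integral_withDensity_eq_integral_toReal_smul hw hw_top]
    exact setIntegral_congr_fun measurableSet_Ioi fun x hx => by simp [hw_eq x hx]
  simp_rw [← hmgf]
  exact ProbabilityTheory.differentiableOn_complexMGF.comp (differentiableOn_neg _) fun z hz =>
    interior_maximal hexp isOpen_Iio (by simpa using hz)

lemma integral_rpow_mul_exp_neg_ofReal_mul {r : ℝ} (hp : 0 < p) (hr : 0 < r) :
    ∫ x in Set.Ioi (0 : ℝ), x ^ (p - 1) • Complex.exp (-r * x) =
      Complex.Gamma p * (r : ℂ) ^ (-p : ℂ) := by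
  have harg : (r : ℂ).arg ≠ π := by
    rw [Complex.arg_ofReal_of_nonneg hr.le]
    exact pi_ne_zero.symm
  rw [Complex.cpow_neg, ← Complex.inv_cpow _ _ harg, ← one_div, mul_comm,
    ← Complex.integral_cpow_mul_exp_neg_mul_Ioi (by simpa using hp) hr]
  refine setIntegral_congr_fun measurableSet_Ioi fun x hx => ?_
  simp only [Complex.real_smul, neg_mul]
  rw [Complex.ofReal_cpow (le_of_lt hx), Complex.ofReal_sub, Complex.ofReal_one]

lemma integral_rpow_mul_exp_neg_mul (hp : 0 < p) (hz : 0 < z.re) :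
    ∫ x in Set.Ioi (0 : ℝ), x ^ (p - 1) • Complex.exp (-z * x) =
      Complex.Gamma p * z ^ (-p : ℂ) := by
  have hopen : IsOpen {z : ℂ | 0 < z.re} := isOpen_lt continuous_const Complex.continuous_re
  have hcpow : DifferentiableOn ℂ (fun z : ℂ => Complex.Gamma p * z ^ (-p : ℂ)) {z | 0 < z.re} :=
    fun w hw => ((differentiableAt_id.cpow_const (Or.inl hw)).const_mul _).differentiableWithinAt
  have hreal : Tendsto (fun r : ℝ => (r : ℂ)) (nhdsWithin 1 {1}ᶜ) (nhdsWithin 1 {1}ᶜ) := by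
    simpa using Complex.continuous_ofReal.continuousWithinAt.tendsto_nhdsWithin (x := (1 : ℝ))
      (s := {1}ᶜ) (t := {1}ᶜ) fun r hr => by simpa using hr
  have hfreq : ∃ᶠ r : ℝ in nhdsWithin 1 {1}ᶜ,
      ∫ x in Set.Ioi (0 : ℝ), x ^ (p - 1) • Complex.exp (-(r : ℂ) * x) =
        Complex.Gamma p * (r : ℂ) ^ (-p : ℂ) :=
    (((lt_mem_nhds one_pos).filter_mono nhdsWithin_le_nhds).mono fun r hr =>
      integral_rpow_mul_exp_neg_ofReal_mul hp hr).frequently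
  exact ((differentiableOn_integral_rpow_mul_exp hp).analyticOnNhd hopen)
    |>.eqOn_of_preconnected_of_frequently_eq (hcpow.analyticOnNhd hopen)
      (convex_halfSpace_re_gt 0).isPreconnected (z₀ := 1) (by simp) (hreal.frequently hfreq) hz

/-- The Bromwich integral `(2πi)⁻¹ ∫ e^{ηs} g(s) ds` along the vertical line `re s = σ`, which is
the inverse Laplace transform of `g` at `η`. -/
noncomputable def bromwich (σ η : ℝ) (g : ℂ → ℂ) : ℂ :=
  (1 / (2 * (π : ℂ))) * ∫ t : ℝ,
    Complex.exp (η * (σ + t * Complex.I)) * g (σ + t * Complex.I)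

lemma bromwich_const_mul (a : ℂ) (g : ℂ → ℂ) :
    bromwich σ η (fun s => a * g s) = a * bromwich σ η g := by
  simp only [bromwich, mul_left_comm _ a, integral_const_mul]

lemma bromwich_eq_fourierInv (σ η : ℝ) (g : ℂ → ℂ) :
    bromwich σ η g = Complex.exp (σ * η) *
      FourierTransformInv.fourierInv (fun w : ℝ => g (σ + ↑(2 * π * w) * Complex.I)) η := by
  have hsub := Measure.integral_comp_mul_left
    (fun t : ℝ => Complex.exp (η * (σ + t * Complex.I)) * g (σ + t * Complex.I)) (2 * π)
  rw [abs_of_pos (by positivity), Complex.real_smul] at hsub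
  have hconst : 1 / (2 * (π : ℂ)) = ↑(2 * π)⁻¹ := by push_cast; exact one_div _
  rw [bromwich, hconst, ← hsub, Real.fourierInv_eq', ← integral_const_mul (Complex.exp (σ * η))]
  refine integral_congr_ae (.of_forall fun w => ?_)
  simp only [smul_eq_mul, ← mul_assoc, ← Complex.exp_add, RCLike.inner_apply, conj_trivial]
  congr 2
  push_cast
  ring

lemma norm_ofReal_add_mul_I (hσ : 0 < σ) (t : ℝ) :
    ‖(σ : ℂ) + t * Complex.I‖ = σ * ‖1 + ↑(t / σ) * Complex.I‖ := by
  have hσ' : (σ : ℂ) ≠ 0 := Complex.ofReal_ne_zero.2 hσ.ne'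
  have hmul : (σ : ℂ) + t * Complex.I = σ * (1 + ↑(t / σ) * Complex.I) := by
    push_cast
    field_simp
  rw [hmul, norm_mul, Complex.norm_real, norm_of_nonneg hσ.le]

lemma integrable_norm_one_add_mul_I_rpow_neg (hp : 1 < p) :
    Integrable fun t : ℝ => ‖1 + t * Complex.I‖ ^ (-p) := by
  refine (integrable_rpow_neg_one_add_norm_sq (E := ℝ) (r := p) (by simpa using hp)).congr
    (.of_forall fun t => ?_)
  have hnorm : ‖1 + t * Complex.I‖ = √(1 + ‖t‖ ^ 2) := by
    simpa using Complex.norm_add_mul_I 1 t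
  simp only [hnorm, sqrt_eq_rpow]
  rw [← rpow_mul (by positivity)]
  ring_nf

lemma integrable_norm_add_mul_I_rpow_neg (hp : 1 < p) (hσ : 0 < σ) :
    Integrable fun t : ℝ => ‖(σ : ℂ) + t * Complex.I‖ ^ (-p) := by
  simp_rw [norm_ofReal_add_mul_I hσ, mul_rpow hσ.le (norm_nonneg _)]
  exact ((integrable_norm_one_add_mul_I_rpow_neg hp).comp_div hσ.ne').const_mul _

lemma ofReal_add_mul_I_mem_slitPlane (hσ : 0 < σ) (t : ℝ) :
    (σ : ℂ) + t * Complex.I ∈ Complex.slitPlane :=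
  Or.inl (by simpa using hσ)

lemma verticalIntegrable_cpow_neg (hp : 1 < p) (hσ : 0 < σ) :
    Complex.VerticalIntegrable (fun s => s ^ (-p : ℂ)) σ := by
  refine (integrable_norm_add_mul_I_rpow_neg hp hσ).mono' ?_ (.of_forall fun t => ?_)
  · exact (Continuous.cpow (by fun_prop) continuous_const
      (ofReal_add_mul_I_mem_slitPlane hσ)).aestronglyMeasurable
  · rw [← Complex.ofReal_neg, Complex.norm_cpow_real]

theorem bromwich_cpow_neg (hp : 1 < p) (hσ : 0 < σ) (hη : 0 < η) :
    bromwich σ η (fun s => s ^ (-p : ℂ)) = ((η ^ (p - 1) : ℝ) : ℂ) / Complex.Gamma p := by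
  have hp0 : 0 < p := one_pos.trans hp
  set f : ℝ → ℂ := (Set.Ioi (0 : ℝ)).indicator fun x => x ^ (p - 1) • Complex.exp (-σ * x)
  have hf : Integrable f :=
    (integrable_indicator_iff measurableSet_Ioi).2
      (integrableOn_rpow_smul_exp_neg_ofReal_mul hp0 hσ)
  have hFf : FourierTransform.fourier f = fun w : ℝ =>
      Complex.Gamma p * ((σ : ℂ) + ↑(2 * π * w) * Complex.I) ^ (-p : ℂ) := by
    ext w
    rw [fourier_real_eq_integral_exp_smul,
      ← integral_rpow_mul_exp_neg_mul hp0 (by simpa using hσ),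
      ← integral_indicator measurableSet_Ioi]
    congr 1 with x
    simp only [f, Set.indicator_apply, smul_ite, smul_zero]
    congr 1
    rw [smul_comm, smul_eq_mul, ← Complex.exp_add]
    push_cast
    ring_nf
  have hFf_int : Integrable (FourierTransform.fourier f) := by
    rw [hFf]
    exact ((verticalIntegrable_cpow_neg hp hσ).comp_mul_left' (by positivity)).const_mul _
  have hfη : f =ᶠ[nhds η] fun x => x ^ (p - 1) • Complex.exp (-σ * x) := by
    filter_upwards [Ioi_mem_nhds hη] with x hx using Set.indicator_of_mem hx _
  have hcont : ContinuousAt f η :=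
    (ContinuousAt.smul (continuousAt_rpow_const _ _ (Or.inl hη.ne')) (by fun_prop)).congr hfη.symm
  have hinv := hf.fourierInv_fourier_eq hFf_int hcont
  have hΓ : Complex.Gamma p ≠ 0 := Complex.Gamma_ne_zero_of_re_pos (by simpa using hp0)
  rw [eq_div_iff hΓ, mul_comm, ← bromwich_const_mul, bromwich_eq_fourierInv, ← hFf, hinv,
    hfη.eq_of_nhds, Complex.real_smul, mul_left_comm, ← Complex.exp_add]
  simp [mul_comm (σ : ℂ)]

end LaplaceInversion

section ContourShift

variable {R σ σ₁ σ₂ η : ℝ} {f : ℂ → ℂ}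

lemma continuous_comp_add_mul_I (hd : DifferentiableOn ℂ f (slitStrip R)) (h0 : 0 < σ)
    (hR : σ < R) : Continuous fun t : ℝ => f (σ + t * Complex.I) :=
  hd.continuousOn.comp_continuous (by fun_prop) fun t =>
    mem_slitStrip_of_re_pos (by simpa using h0) (by simpa using hR)

lemma tendsto_add_mul_I_cocompact (hσ : |σ| < R) (τ : ℝ) :
    Tendsto (fun t : ℝ => (σ : ℂ) + t * Complex.I) (cocompact ℝ) (𝓟 (farStrip R τ)) := by
  refine tendsto_principal.2 ?_
  filter_upwards [tendsto_norm_cocompact_atTop.eventually_ge_atTop τ] with t ht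
  exact ⟨by simpa using hσ, by simpa using ht⟩

lemma RapidDecay.verticalIntegrable (hf : RapidDecay R f)
    (hd : DifferentiableOn ℂ f (slitStrip R)) (h0 : 0 < σ) (hR : σ < R) :
    Complex.VerticalIntegrable f σ := by
  have hO : (fun t : ℝ => f (σ + t * Complex.I)) =O[cocompact ℝ]
      fun t => ‖(σ : ℂ) + t * Complex.I‖ ^ (-2 : ℝ) :=
    (hf 1 one_pos (-2)).comp_tendsto (tendsto_add_mul_I_cocompact (by rwa [abs_of_pos h0]) 1)
  exact (continuous_comp_add_mul_I hd h0 hR).locallyIntegrable.integrable_of_isBigO_cocompact hO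
    ((integrable_norm_add_mul_I_rpow_neg one_lt_two h0).integrableAtFilter _)

lemma RapidDecay.tendsto_horizontal_integral (hf : RapidDecay R f) (h₁ : |σ₁| < R)
    (h₂ : |σ₂| < R) :
    Tendsto (fun T : ℝ => ∫ x in σ₁..σ₂, f (x + T * Complex.I)) (cocompact ℝ) (nhds 0) := by
  obtain ⟨C, hC, hfC⟩ := (hf 1 one_pos (-1)).exists_nonneg
  rw [isBigOWith_principal] at hfC
  have hlim : Tendsto (fun T : ℝ => C * ‖T‖⁻¹ * |σ₂ - σ₁|) (cocompact ℝ) (nhds 0) := by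
    simpa using ((tendsto_inv_atTop_zero.comp (tendsto_norm_cocompact_atTop (E := ℝ))).const_mul
      C).mul_const |σ₂ - σ₁|
  refine squeeze_zero_norm' ?_ hlim
  filter_upwards [tendsto_norm_cocompact_atTop.eventually_ge_atTop 1] with T hT
  refine intervalIntegral.norm_integral_le_of_norm_le_const fun x hx => ?_
  have hxR : |x| < R := abs_lt.2 (Set.ordConnected_Ioo.uIcc_subset (abs_lt.1 h₁) (abs_lt.1 h₂)
    (Set.uIoc_subset_uIcc hx))
  have him : ‖T‖ ≤ ‖(x : ℂ) + T * Complex.I‖ := by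
    simpa using Complex.abs_im_le_norm ((x : ℂ) + T * Complex.I)
  refine (hfC _ ⟨by simpa using hxR, by simpa using hT⟩).trans ?_
  rw [norm_of_nonneg (by positivity), rpow_neg_one]
  gcongr

lemma RapidDecay.integral_add_mul_I_eq (hf : RapidDecay R f)
    (hd : DifferentiableOn ℂ f (slitStrip R)) (h₁ : σ₁ ∈ Set.Ioo 0 R) (h₂ : σ₂ ∈ Set.Ioo 0 R) :
    ∫ t : ℝ, f (σ₁ + t * Complex.I) = ∫ t : ℝ, f (σ₂ + t * Complex.I) := by
  have hrect : ∀ T : ℝ, (∫ x in σ₁..σ₂, f (x + ↑(-T) * Complex.I)) -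
      (∫ x in σ₁..σ₂, f (x + T * Complex.I)) +
      Complex.I • (∫ t in -T..T, f (σ₂ + t * Complex.I)) -
      Complex.I • (∫ t in -T..T, f (σ₁ + t * Complex.I)) = 0 := fun T => by
    have hsub : Set.uIcc σ₁ σ₂ ×ℂ Set.uIcc (-T) T ⊆ slitStrip R := fun z hz =>
      have hz_re := Set.ordConnected_Ioo.uIcc_subset h₁ h₂ hz.1
      mem_slitStrip_of_re_pos hz_re.1 hz_re.2
    simpa using Complex.integral_boundary_rect_eq_zero_of_differentiableOn f
      (σ₁ + ↑(-T) * Complex.I) (σ₂ + T * Complex.I) (hd.mono (by simpa using hsub))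
  have hvert : ∀ σ ∈ Set.Ioo 0 R, Tendsto (fun T : ℝ => ∫ t in -T..T, f (σ + t * Complex.I)) atTop
      (nhds (∫ t : ℝ, f (σ + t * Complex.I))) := fun σ hσ =>
    intervalIntegral_tendsto_integral (hf.verticalIntegrable hd hσ.1 hσ.2)
      tendsto_neg_atTop_atBot tendsto_id
  have hhor := hf.tendsto_horizontal_integral (σ₁ := σ₁) (σ₂ := σ₂)
    (by rw [abs_of_pos h₁.1]; exact h₁.2) (by rw [abs_of_pos h₂.1]; exact h₂.2)
  have hlim := ((((hhor.comp (tendsto_neg_atTop_atBot.mono_right atBot_le_cocompact)).sub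
    (hhor.mono_left atTop_le_cocompact)).add ((hvert σ₂ h₂).const_smul Complex.I)).sub
    ((hvert σ₁ h₁).const_smul Complex.I))
  have heq := tendsto_nhds_unique (hlim.congr hrect) tendsto_const_nhds
  rw [sub_zero, zero_add, ← smul_sub, smul_eq_zero_iff_right Complex.I_ne_zero, sub_eq_zero] at heq
  exact heq.symm

lemma rapidDecay_exp_mul (hf : RapidDecay R f) (η : ℝ) :
    RapidDecay R fun s => Complex.exp (η * s) * f s := by
  simpa only [mul_comm] using hf.mul (moderateGrowth_exp_mul R η)

lemma differentiableOn_exp_mul (hd : DifferentiableOn ℂ f (slitStrip R)) (η : ℝ) :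
    DifferentiableOn ℂ (fun s => Complex.exp (η * s) * f s) (slitStrip R) := by
  fun_prop

lemma RapidDecay.bromwich_eq (hf : RapidDecay R f) (hd : DifferentiableOn ℂ f (slitStrip R))
    (h₁ : σ₁ ∈ Set.Ioo 0 R) (h₂ : σ₂ ∈ Set.Ioo 0 R) :
    bromwich σ₁ η f = bromwich σ₂ η f := by
  rw [bromwich, (rapidDecay_exp_mul hf η).integral_add_mul_I_eq (differentiableOn_exp_mul hd η)
    h₁ h₂, bromwich]

lemma bromwich_deriv (hf : RapidDecay R f) (hf' : RapidDecay R (deriv f))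
    (hd : DifferentiableOn ℂ f (slitStrip R)) (hσ : σ ∈ Set.Ioo 0 R) :
    bromwich σ η (deriv f) = -η * bromwich σ η f := by
  have hd' := hd.deriv (isOpen_slitStrip R)
  set E : ℝ → ℂ := fun t => Complex.exp (η * (σ + t * Complex.I))
  have hint : Integrable fun t : ℝ => E t * f (σ + t * Complex.I) :=
    (rapidDecay_exp_mul hf η).verticalIntegrable (differentiableOn_exp_mul hd η) hσ.1 hσ.2
  have hint' : Integrable fun t : ℝ => E t * deriv f (σ + t * Complex.I) :=
    (rapidDecay_exp_mul hf' η).verticalIntegrable (differentiableOn_exp_mul hd' η) hσ.1 hσ.2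
  have hderiv : ∀ t : ℝ, HasDerivAt (fun t : ℝ => E t * f (σ + t * Complex.I))
      (Complex.I * (η * (E t * f (σ + t * Complex.I)) + E t * deriv f (σ + t * Complex.I))) t := by
    intro t
    have hline : HasDerivAt (fun t : ℝ => (σ : ℂ) + t * Complex.I) Complex.I t := by
      simpa using (Complex.ofRealCLM.hasDerivAt (x := t)).mul_const Complex.I |>.const_add (σ : ℂ)
    have hfd : HasDerivAt f (deriv f (σ + t * Complex.I)) (σ + t * Complex.I) :=
      (hd.differentiableAt ((isOpen_slitStrip R).mem_nhds (mem_slitStrip_of_re_pos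
        (by simpa using hσ.1) (by simpa using hσ.2)))).hasDerivAt
    refine ((hline.const_mul (η : ℂ)).cexp.mul (hfd.comp t hline)).congr_deriv ?_
    simp only [E, Function.comp]
    ring
  have hzero := integral_eq_zero_of_hasDerivAt_of_integrable hderiv
    (((hint.const_mul _).add hint').const_mul _) hint
  rw [integral_const_mul, integral_add (hint.const_mul _) hint', integral_const_mul] at hzero
  have hsum := (mul_eq_zero.1 hzero).resolve_left Complex.I_ne_zero
  rw [bromwich, bromwich, eq_neg_of_add_eq_zero_right hsum]
  ring

theorem RapidDecay.bromwich_iteratedDeriv (hf : RapidDecay R f)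
    (hd : DifferentiableOn ℂ f (slitStrip R)) (hσ : σ ∈ Set.Ioo 0 R) (k : ℕ) :
    bromwich σ η (iteratedDeriv k f) = (-η) ^ k * bromwich σ η f := by
  obtain ⟨R', hσR', hR'⟩ := exists_between hσ.2
  have hdecay := rapidDecay_iteratedDeriv hf hd hR'
  have hsub : slitStrip R' ⊆ slitStrip R := fun s hs => ⟨hs.1, hs.2.trans hR'⟩
  induction k with
  | zero => simp
  | succ k ih =>
    rw [iteratedDeriv_succ, bromwich_deriv (hdecay k) (iteratedDeriv_succ (f := f) ▸ hdecay (k + 1))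
      (differentiableOn_iteratedDeriv (hd.mono hsub) (isOpen_slitStrip R') k) ⟨hσ.1, hσR'⟩, ih]
    ring

end ContourShift

section Bromwich

variable {m p σ η : ℝ} {f g : ℂ → ℂ}

lemma bromwich_congr (h : Set.EqOn f g {s | s.re = σ}) : bromwich σ η f = bromwich σ η g := by
  have hline : ∀ t : ℝ, f (σ + t * Complex.I) = g (σ + t * Complex.I) := fun t => h (by simp)
  simp only [bromwich, hline]

lemma verticalIntegrable_exp_mul (hf : Complex.VerticalIntegrable f σ) (η : ℝ) :
    Complex.VerticalIntegrable (fun s => Complex.exp (η * s) * f s) σ := by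
  refine Integrable.bdd_mul (c := rexp (η * σ)) hf (by fun_prop) (.of_forall fun t => ?_)
  simp [Complex.norm_exp]

lemma bromwich_sub (hf : Complex.VerticalIntegrable f σ) (hg : Complex.VerticalIntegrable g σ) :
    bromwich σ η (fun s => f s - g s) = bromwich σ η f - bromwich σ η g := by
  simp only [bromwich, mul_sub]
  rw [integral_sub (verticalIntegrable_exp_mul hf η) (verticalIntegrable_exp_mul hg η), mul_sub]

lemma bromwich_finsetSum {ι : Type*} (I : Finset ι) {F : ι → ℂ → ℂ}
    (hF : ∀ i ∈ I, Complex.VerticalIntegrable (F i) σ) :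
    bromwich σ η (fun s => ∑ i ∈ I, F i s) = ∑ i ∈ I, bromwich σ η (F i) := by
  simp only [bromwich, mul_sum]
  rw [integral_finsetSum _ fun i hi => verticalIntegrable_exp_mul (hF i hi) η, mul_sum]

lemma inv_Gamma_eq_ascPochhammer_mul_inv_Gamma (a : ℂ) (k : ℕ) :
    (Complex.Gamma a)⁻¹ = (ascPochhammer ℂ k).eval a * (Complex.Gamma (a + k))⁻¹ := by
  induction k with
  | zero => simp
  | succ k ih =>
    have hΓ := Complex.one_div_Gamma_eq_self_mul_one_div_Gamma_add_one (a + k)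
    rw [ih, hΓ, ascPochhammer_succ_eval, Nat.cast_succ, add_assoc, mul_assoc]

lemma iteratedDeriv_cpow_neg (a : ℂ) (k : ℕ) :
    Set.EqOn (iteratedDeriv k fun s : ℂ => s ^ (-a))
      (fun s => (-1) ^ k * (ascPochhammer ℂ k).eval a * s ^ (-(a + k))) Complex.slitPlane := by
  induction k with
  | zero => intro s _; simp
  | succ k ih =>
    intro s hs
    have heq := ih.eventuallyEq_of_mem (Complex.isOpen_slitPlane.mem_nhds hs)
    rw [iteratedDeriv_succ, heq.deriv_eq,
      (((hasDerivAt_id' s).cpow_const hs).const_mul _).deriv, ascPochhammer_succ_eval]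
    push_cast
    ring_nf

lemma iteratedDeriv_cpow_neg_ofReal (p : ℝ) (k : ℕ) :
    Set.EqOn (iteratedDeriv k fun s : ℂ => s ^ (-p : ℂ))
      (fun s => (-1) ^ k * (ascPochhammer ℂ k).eval (p : ℂ) * s ^ (-(p + k : ℝ) : ℂ))
      Complex.slitPlane := by
  simpa using iteratedDeriv_cpow_neg p k

lemma verticalIntegrable_iteratedDeriv_cpow_neg {k : ℕ} (hpk : 1 < p + k) (hσ : 0 < σ) :
    Complex.VerticalIntegrable (iteratedDeriv k fun s : ℂ => s ^ (-p : ℂ)) σ :=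
  ((verticalIntegrable_cpow_neg hpk hσ).const_mul _).congr (.of_forall fun t =>
    (iteratedDeriv_cpow_neg_ofReal p k (ofReal_add_mul_I_mem_slitPlane hσ t)).symm)

theorem bromwich_iteratedDeriv_cpow_neg {k : ℕ} (hpk : 1 < p + k) (hσ : 0 < σ) (hη : 0 < η) :
    bromwich σ η (iteratedDeriv k fun s => s ^ (-p : ℂ)) =
      (-η) ^ k * (((η ^ (p - 1) : ℝ) : ℂ) / Complex.Gamma p) := by
  have hpow : η ^ (p + k - 1) = η ^ k * η ^ (p - 1) := by
    rw [← rpow_natCast, ← rpow_add hη]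
    ring_nf
  have hline : {s : ℂ | s.re = σ} ⊆ Complex.slitPlane := fun s hs => Or.inl (hσ.trans_eq hs.symm)
  rw [bromwich_congr ((iteratedDeriv_cpow_neg_ofReal p k).mono hline), bromwich_const_mul,
    bromwich_cpow_neg hpk hσ hη, hpow, div_eq_mul_inv _ (Complex.Gamma p),
    inv_Gamma_eq_ascPochhammer_mul_inv_Gamma p k, neg_pow (η : ℂ)]
  push_cast
  ring

lemma integral_norm_add_mul_I_rpow_neg (m : ℝ) (hσ : 0 < σ) :
    ∫ t : ℝ, ‖(σ : ℂ) + t * Complex.I‖ ^ (-m) =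
      σ ^ (1 - m) * ∫ t : ℝ, ‖1 + t * Complex.I‖ ^ (-m) := by
  simp_rw [norm_ofReal_add_mul_I hσ, mul_rpow hσ.le (norm_nonneg _)]
  rw [integral_const_mul, Measure.integral_comp_div (fun t : ℝ => ‖1 + t * Complex.I‖ ^ (-m)),
    abs_of_pos hσ, smul_eq_mul, ← mul_assoc, ← rpow_add_one hσ.ne', neg_add_eq_sub]

lemma norm_bromwich_inv_le {C : ℝ} (hm : 1 < m) (hη : 0 < η)
    (hg : ∀ s : ℂ, s.re = η⁻¹ → ‖g s‖ ≤ C * ‖s‖ ^ (-m)) :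
    ‖bromwich η⁻¹ η g‖ ≤
      rexp 1 * C * (∫ t : ℝ, ‖1 + t * Complex.I‖ ^ (-m)) / (2 * π) * η ^ (m - 1) := by
  have hσ : 0 < η⁻¹ := inv_pos.2 hη
  have hbound : ∀ t : ℝ, ‖Complex.exp (η * (↑η⁻¹ + t * Complex.I)) * g (↑η⁻¹ + t * Complex.I)‖ ≤
      rexp 1 * C * ‖(↑η⁻¹ : ℂ) + t * Complex.I‖ ^ (-m) := fun t => by
    have hre : (η * (↑η⁻¹ + t * Complex.I) : ℂ).re = 1 := by simp [hη.ne']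
    rw [norm_mul, Complex.norm_exp, hre, mul_assoc]
    gcongr
    exact hg _ (by simp)
  have hint := norm_integral_le_of_norm_le
    ((integrable_norm_add_mul_I_rpow_neg hm hσ).const_mul (rexp 1 * C)) (.of_forall hbound)
  rw [integral_const_mul, integral_norm_add_mul_I_rpow_neg m hσ, inv_rpow hη.le, ← rpow_neg hη.le,
    neg_sub] at hint
  have hconst : ‖1 / (2 * (π : ℂ))‖ = 1 / (2 * π) := by simp [abs_of_pos pi_pos]
  rw [bromwich, norm_mul, hconst, one_div_mul_eq_div, div_mul_eq_mul_div]
  gcongr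
  exact hint.trans_eq (by ring)

theorem isBigO_bromwich_inv (hm : 1 < m)
    (hg : g =O[comap Complex.re (nhdsWithin 0 (Set.Ioi 0))] fun s => ‖s‖ ^ (-m)) :
    (fun η => bromwich η⁻¹ η g) =O[atTop] fun η => η ^ (m - 1) := by
  obtain ⟨C, hC⟩ := hg.bound
  refine .of_bound (rexp 1 * C * (∫ t : ℝ, ‖1 + t * Complex.I‖ ^ (-m)) / (2 * π)) ?_
  filter_upwards [tendsto_inv_atTop_nhdsGT_zero.eventually (eventually_comap.1 hC),
    eventually_gt_atTop 0] with η hη hη0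
  rw [norm_of_nonneg (rpow_nonneg hη0.le _)]
  exact norm_bromwich_inv_le hm hη0 fun s hs => by
    simpa [abs_of_nonneg, rpow_nonneg] using hη s hs

end Bromwich

/-! ### Watson's lemma for Bromwich integrals -/

section Watson

variable {R R' c x ρ η : ℝ} {f g : ℂ → ℂ} {ι : Type*} {I : Finset ι} {r : ι → ℝ} {k : ℕ}

lemma isBigO_comap_re_of_farStrip (hR : 0 < R)
    (h0 : g =O[nhdsWithin 0 {s : ℂ | 0 < s.re}] fun s => ‖s‖ ^ x)
    (hfar : ∀ τ > 0, g =O[𝓟 (farStrip R τ)] fun s => ‖s‖ ^ x) :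
    g =O[comap Complex.re (nhdsWithin 0 (Set.Ioi 0))] fun s => ‖s‖ ^ x := by
  obtain ⟨A, hA⟩ := isBigO_iff.1 h0
  obtain ⟨δ, hδ, hnear⟩ := Metric.eventually_nhds_iff.1 (eventually_nhdsWithin_iff.1 hA)
  obtain ⟨B, hB⟩ := isBigO_principal.1 (hfar (δ / 2) (half_pos hδ))
  refine .of_bound (max A B) ?_
  have hre : ∀ᶠ u in nhdsWithin (0 : ℝ) (Set.Ioi 0), u ∈ Set.Ioo 0 (min (δ / 2) R) :=
    Ioo_mem_nhdsGT (lt_min (half_pos hδ) hR)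
  filter_upwards [preimage_mem_comap hre] with s hs
  obtain ⟨hs0, hsδ⟩ := hs
  obtain ⟨hsδ, hsR⟩ := lt_min_iff.1 hsδ
  have habs := abs_of_pos hs0
  rcases lt_or_ge |s.im| (δ / 2) with him | him
  · have hsnorm : ‖s‖ < δ := (Complex.norm_le_abs_re_add_abs_im s).trans_lt (by linarith)
    refine (hnear (by rwa [dist_zero_right]) hs0).trans ?_
    gcongr
    exact le_max_left _ _
  · refine (hB s ⟨by rwa [habs], him⟩).trans ?_
    gcongr
    exact le_max_right _ _

lemma differentiableOn_sum_cpow_neg (I : Finset ι) (a : ι → ℂ) (r : ι → ℝ) :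
    DifferentiableOn ℂ (fun s : ℂ => ∑ i ∈ I, a i * s ^ (-r i : ℂ)) Complex.slitPlane :=
  .fun_sum fun _ _ => (differentiableOn_id.cpow_const fun _ hs => hs).const_mul _

lemma iteratedDeriv_sub_sum_cpow_neg (hd : DifferentiableOn ℂ f (slitStrip R)) (I : Finset ι)
    (a : ι → ℂ) (r : ι → ℝ) (k : ℕ) :
    Set.EqOn (iteratedDeriv k fun s => f s - ∑ i ∈ I, a i * s ^ (-r i : ℂ))
      (fun s => iteratedDeriv k f s - ∑ i ∈ I, a i * iteratedDeriv k (fun s => s ^ (-r i : ℂ)) s)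
      (slitStrip R) := by
  intro s hs
  have hcpow : ∀ i ∈ I, ContDiffAt ℂ k (fun s : ℂ => a i * s ^ (-r i : ℂ)) s := fun i _ =>
    (analyticAt_const.mul (analyticAt_id.cpow analyticAt_const hs.1)).contDiffAt
  have hf : ContDiffAt ℂ k f s :=
    (hd.analyticAt ((isOpen_slitStrip R).mem_nhds hs)).contDiffAt
  rw [iteratedDeriv_fun_sub hf (ContDiffAt.sum hcpow), iteratedDeriv_fun_sum hcpow]
  simp only [iteratedDeriv_const_mul_field]

lemma isBigO_iteratedDeriv_sub_sum_farStrip {τ : ℝ} (hf : RapidDecay R f)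
    (hd : DifferentiableOn ℂ f (slitStrip R)) (hR : R' < R) (a : ι → ℂ) (hr : ∀ i ∈ I, ρ ≤ r i)
    (k : ℕ) (hτ : 0 < τ) :
    (iteratedDeriv k fun s => f s - ∑ i ∈ I, a i * s ^ (-r i : ℂ)) =O[𝓟 (farStrip R' τ)]
      fun s => ‖s‖ ^ (-(ρ + k)) := by
  have hcpow : ∀ i ∈ I, (fun s => a i * iteratedDeriv k (fun s => s ^ (-r i : ℂ)) s)
      =O[𝓟 (farStrip R' τ)] fun s => ‖s‖ ^ (-(ρ + k)) := fun i hi => by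
    have hnorm : (fun s : ℂ => s ^ (-(r i + k : ℝ) : ℂ)) =O[𝓟 (farStrip R' τ)]
        fun s => ‖s‖ ^ (-(r i + k)) := .of_norm_le fun s => by
      rw [← Complex.ofReal_neg, Complex.norm_cpow_real]
    refine .const_mul_left (.congr' ((hnorm.trans (isBigO_norm_rpow_farStrip hτ ?_)).const_mul_left
      ((-1) ^ k * (ascPochhammer ℂ k).eval (r i : ℂ))) ?_ .rfl) _
    · linarith [hr i hi]
    · exact eventually_principal.2 fun s hs =>
        (iteratedDeriv_cpow_neg_ofReal (r i) k (farStrip_subset_slitStrip hτ hs).1).symm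
  refine ((rapidDecay_iteratedDeriv hf hd hR k τ hτ _).sub (.fun_sum hcpow)).congr' ?_ .rfl
  refine eventually_principal.2 fun s hs => (iteratedDeriv_sub_sum_cpow_neg hd I a r k ?_).symm
  exact ⟨(farStrip_subset_slitStrip hτ hs).1, hs.1.trans hR⟩

lemma bromwich_iteratedDeriv_sub_sum_cpow_neg (hf : RapidDecay R f)
    (hd : DifferentiableOn ℂ f (slitStrip R)) (a : ι → ℂ) (hr : ∀ i ∈ I, 1 < r i + k)
    (hc : c ∈ Set.Ioo 0 R) (hη : 0 < η) :
    bromwich c η (iteratedDeriv k fun s => f s - ∑ i ∈ I, a i * s ^ (-r i : ℂ)) =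
      (-η) ^ k * (bromwich c η f - ∑ i ∈ I, a i * (((η ^ (r i - 1) : ℝ) : ℂ) / Complex.Gamma (r i)))
      := by
  have hc_line : {s : ℂ | s.re = c} ⊆ slitStrip R := fun s hs =>
    mem_slitStrip_of_re_pos (hc.1.trans_eq hs.symm) (Eq.trans_lt hs hc.2)
  obtain ⟨R', hcR', hR'⟩ := exists_between hc.2
  have hf_int : Complex.VerticalIntegrable (iteratedDeriv k f) c :=
    (rapidDecay_iteratedDeriv hf hd hR' k).verticalIntegrable
      ((differentiableOn_iteratedDeriv hd (isOpen_slitStrip R) k).mono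
        fun s hs => ⟨hs.1, hs.2.trans hR'⟩) hc.1 hcR'
  have hcpow_int : ∀ i ∈ I, Complex.VerticalIntegrable
      (fun s => a i * iteratedDeriv k (fun s => s ^ (-r i : ℂ)) s) c := fun i hi =>
    (verticalIntegrable_iteratedDeriv_cpow_neg (hr i hi) hc.1).const_mul (a i)
  have hsum_int : Complex.VerticalIntegrable
      (fun s => ∑ i ∈ I, a i * iteratedDeriv k (fun s => s ^ (-r i : ℂ)) s) c :=
    integrable_finsetSum I hcpow_int
  rw [bromwich_congr ((iteratedDeriv_sub_sum_cpow_neg hd I a r k).mono hc_line),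
    bromwich_sub hf_int hsum_int, bromwich_finsetSum I hcpow_int, hf.bromwich_iteratedDeriv hd hc,
    mul_sub, mul_sum]
  congr 1
  refine sum_congr rfl fun i hi => ?_
  rw [bromwich_const_mul, bromwich_iteratedDeriv_cpow_neg (hr i hi) hc.1 hη, mul_left_comm]

theorem isBigO_bromwich_sub_sum (hf : RapidDecay R f) (hd : DifferentiableOn ℂ f (slitStrip R))
    (hc : c ∈ Set.Ioo 0 R) (a : ι → ℂ) (hr : ∀ i ∈ I, ρ ≤ r i)
    (h0 : (fun s => f s - ∑ i ∈ I, a i * s ^ (-r i : ℂ)) =O[nhdsWithin 0 Complex.slitPlane]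
      fun s => ‖s‖ ^ (-ρ)) :
    (fun η : ℝ => bromwich c η f -
        ∑ i ∈ I, a i * (((η ^ (r i - 1) : ℝ) : ℂ) / Complex.Gamma (r i))) =O[atTop]
      fun η => η ^ (ρ - 1) := by
  have hR : 0 < R := hc.1.trans hc.2
  obtain ⟨k, hk⟩ := exists_nat_gt (1 - ρ)
  set rem : ℂ → ℂ := fun s => f s - ∑ i ∈ I, a i * s ^ (-r i : ℂ)
  have hrem : DifferentiableOn ℂ rem (slitStrip R) :=
    hd.sub ((differentiableOn_sum_cpow_neg I a r).mono fun s hs => hs.1)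
  have hnear : iteratedDeriv k rem =O[nhdsWithin 0 {s : ℂ | 0 < s.re}]
      fun s => ‖s‖ ^ (-(ρ + k)) := by
    simpa only [neg_add'] using isBigO_iteratedDeriv_nhdsWithin_zero hR hrem h0 k
  have hbromwich := isBigO_bromwich_inv (m := ρ + k) (by linarith) <|
    isBigO_comap_re_of_farStrip (half_pos hR) hnear fun τ hτ =>
      isBigO_iteratedDeriv_sub_sum_farStrip hf hd (half_lt_self hR) a hr k hτ
  have hpow : (fun η : ℝ => ((-η : ℂ) ^ k)⁻¹) =O[atTop] fun η => (η ^ k)⁻¹ :=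
    isBigO_of_le _ fun η => by simp
  refine (hpow.mul hbromwich).congr' ?_ ?_
  · filter_upwards [tendsto_inv_atTop_nhdsGT_zero.eventually (Ioo_mem_nhdsGT hR),
      eventually_gt_atTop 0] with η hηR hη
    have hη' : (-η : ℂ) ^ k ≠ 0 := by simp [hη.ne']
    rw [bromwich_iteratedDeriv_sub_sum_cpow_neg hf hd a (fun i hi => by linarith [hr i hi]) hηR hη,
      hf.bromwich_eq hd hηR hc, inv_mul_cancel_left₀ hη']
  · filter_upwards [eventually_gt_atTop 0] with η hη
    rw [← rpow_natCast, ← rpow_neg hη.le, ← rpow_add hη]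
    ring_nf

end Watson

/-! ### Asymptotics of `F_q^{(2)}` and `S` -/

section Growth

variable {R τ : ℝ} {f : ℂ → ℂ}

lemma HasKummerGrowth.moderateGrowth (hf : HasKummerGrowth f) (b R : ℝ) :
    ModerateGrowth R fun s => f (b * s) := by
  obtain ⟨C, K, hf⟩ := hf
  have hC : 0 ≤ C := by simpa using (norm_nonneg _).trans (hf 0)
  refine fun τ hτ => ⟨K, isBigO_principal.2 ⟨C * (τ⁻¹ + |b|) ^ K * rexp (|b| * R), fun s hs => ?_⟩⟩
  have hR : 0 ≤ R := (abs_nonneg _).trans hs.1.le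
  have hpoly : 1 + ‖b * s‖ ≤ (τ⁻¹ + |b|) * ‖s‖ := by
    have hone : 1 ≤ τ⁻¹ * ‖s‖ := (one_le_inv_mul₀ hτ).2 (le_norm_of_mem_farStrip hs)
    rw [norm_mul, Complex.norm_real, norm_eq_abs]
    linarith
  have hexp : max 1 (rexp (b * s).re) ≤ rexp (|b| * R) := by
    rw [Complex.re_ofReal_mul]
    have hbs : b * s.re ≤ |b| * |s.re| := (le_abs_self _).trans (abs_mul _ _).le
    exact max_le (one_le_exp (by positivity)) (exp_le_exp.2 (hbs.trans (by gcongr; exact hs.1.le)))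
  rw [norm_of_nonneg (by positivity), rpow_natCast]
  calc ‖f (b * s)‖ ≤ C * (1 + ‖b * s‖) ^ K * max 1 (rexp (b * s).re) := hf _
    _ ≤ C * ((τ⁻¹ + |b|) * ‖s‖) ^ K * rexp (|b| * R) := by gcongr
    _ = C * (τ⁻¹ + |b|) ^ K * rexp (|b| * R) * ‖s‖ ^ K := by rw [mul_pow]; ring

lemma exp_abs_im_sub_exp_neg_abs_im_le (z : ℂ) :
    rexp |z.im| - rexp (-|z.im|) ≤ 2 * ‖Complex.sin z‖ := by
  have hsin : ‖Complex.exp (-z * Complex.I) - Complex.exp (z * Complex.I)‖ =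
      2 * ‖Complex.sin z‖ := by
    have h := congrArg norm (Complex.two_sin z)
    simpa using h.symm
  have hneg : ‖Complex.exp (-z * Complex.I)‖ = rexp z.im := by simp [Complex.norm_exp]
  have hpos : ‖Complex.exp (z * Complex.I)‖ = rexp (-z.im) := by simp [Complex.norm_exp]
  rw [← hsin]
  rcases abs_choice z.im with h | h
  · rw [h, ← hneg, ← hpos]
    exact norm_sub_norm_le _ _
  · rw [h, neg_neg, ← hneg, ← hpos, norm_sub_rev]
    exact norm_sub_norm_le _ _

lemma rapidDecay_inv_sin_pi_mul (R : ℝ) :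
    RapidDecay R fun s => (Complex.sin (π * s))⁻¹ := by
  refine rapidDecay_of_isBigO_exp pi_pos fun τ hτ => ?_
  set d := 1 - rexp (-(2 * (π * τ)))
  have hd : 0 < d := sub_pos.2 (exp_lt_one_iff.2 (neg_neg_iff_pos.2 (by positivity)))
  refine isBigO_principal.2 ⟨2 / d, fun s hs => ?_⟩
  have him : |(π * s : ℂ).im| = π * |s.im| := by
    rw [Complex.im_ofReal_mul, abs_mul, abs_of_pos pi_pos]
  have hsin : d * rexp (π * |s.im|) ≤ 2 * ‖Complex.sin (π * s)‖ := by
    have hexp : rexp (-(π * |s.im|)) ≤ rexp (-(2 * (π * τ)) + π * |s.im|) := by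
      gcongr
      nlinarith [pi_pos, hs.2]
    have h := exp_abs_im_sub_exp_neg_abs_im_le (π * s)
    rw [exp_add] at hexp
    rw [him] at h
    linarith
  have hpos : 0 < ‖Complex.sin (π * s)‖ := by
    have := exp_pos (π * |s.im|)
    nlinarith
  rw [norm_inv, norm_of_nonneg (exp_pos _).le, exp_neg, inv_le_iff_one_le_mul₀ hpos]
  field_simp
  linarith

end Growth

section F2

variable {q β c : ℝ}

lemma neg_sub_half_ne_neg_natCast (hq : ∀ k : ℕ, q ≠ k - 1 / 2) (k : ℕ) :
    -(q : ℂ) - 1 / 2 ≠ -k := by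
  intro h
  refine hq k ?_
  have hC : (q : ℂ) = ((k - 1 / 2 : ℝ) : ℂ) := by
    push_cast
    linear_combination -h
  exact_mod_cast hC

lemma f2_eq (q β : ℝ) (s : ℂ) :
    f2 q β s = π * ((Complex.sin (π * s))⁻¹ * s *
      kummerM (-1 / 2) (-(q : ℂ) - 1 / 2) (((2 / β : ℝ) : ℂ) * s)) := by
  have harg : 2 * s / (β : ℂ) = ((2 / β : ℝ) : ℂ) * s := by push_cast; ring
  rw [f2, harg]
  ring

lemma rapidDecay_f2 (hq : ∀ k : ℕ, q ≠ k - 1 / 2) (β R : ℝ) : RapidDecay R (f2 q β) := by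
  have hM := hasKummerGrowth_kummerM (a := -1 / 2) (neg_sub_half_ne_neg_natCast hq)
  have hid : ModerateGrowth R fun s => s := by simpa using moderateGrowth_cpow_ofReal R 1
  intro τ hτ x
  simp only [funext (f2_eq q β)]
  have hdecay := ((rapidDecay_inv_sin_pi_mul R).mul hid).mul (hM.moderateGrowth (2 / β) R)
  exact (hdecay τ hτ x).const_mul_left _

lemma sin_pi_mul_ne_zero_of_mem_slitStrip {s : ℂ} (hs : s ∈ slitStrip 1) :
    Complex.sin (π * s) ≠ 0 := by
  refine sin_pi_mul_ne_zero fun ⟨n, hn⟩ => ?_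
  obtain ⟨hslit, hre⟩ := hs
  subst hn
  have hn1 : |n| < 1 := by exact_mod_cast hre
  simp [Int.abs_lt_one_iff.1 hn1] at hslit

lemma differentiableOn_f2 (q β : ℝ) : DifferentiableOn ℂ (f2 q β) (slitStrip 1) := by
  intro s hs
  have hM : Differentiable ℂ (kummerM (-1 / 2) (-(q : ℂ) - 1 / 2)) := differentiable_kummerM _ _
  refine DifferentiableAt.differentiableWithinAt ?_
  simp only [funext (f2_eq q β)]
  have hsin : DifferentiableAt ℂ (fun s : ℂ => (Complex.sin (π * s))⁻¹) s :=
    .fun_inv (by fun_prop) (sin_pi_mul_ne_zero_of_mem_slitStrip hs)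
  fun_prop

lemma F2_eq_bromwich (q β c η : ℝ) :
    F2 q β c η = bromwich c η fun s => f2 q β s * s ^ (-(q + 5 / 2 : ℝ) : ℂ) := by
  simp only [F2, bromwich, mul_div_assoc, div_eq_mul_inv (f2 _ _ _), ← Complex.cpow_neg]
  push_cast
  rfl

lemma isBigO_f2_mul_cpow_sub_sum (q β p : ℝ) (N : ℕ) :
    (fun s => f2 q β s * s ^ (-p : ℂ) - ∑ n ∈ Finset.range N, acoef q β n * s ^ (-(p - n : ℝ) : ℂ))
      =O[nhdsWithin 0 Complex.slitPlane] fun s => ‖s‖ ^ (-(p - N)) := by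
  have hsub : Complex.slitPlane ⊆ {0}ᶜ := fun s hs => Complex.slitPlane_ne_zero hs
  have hTaylor := (isBigO_sub_sum_range_of_hasSum one_pos (fun s => hasSum_f2 q β) N).mono
    (nhdsWithin_mono 0 hsub)
  have hcpow : (fun s : ℂ => s ^ (-p : ℂ)) =O[nhdsWithin 0 Complex.slitPlane]
      fun s => ‖s‖ ^ (-p) := .of_norm_le fun s => by
    rw [← Complex.ofReal_neg, Complex.norm_cpow_real]
  refine (hTaylor.norm_right.mul hcpow).congr' ?_ ?_ <;>
    filter_upwards [self_mem_nhdsWithin] with s hs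
  · have hs0 := Complex.slitPlane_ne_zero hs
    rw [sub_mul, sum_mul]
    congr 1
    refine sum_congr rfl fun n _ => ?_
    rw [mul_assoc, ← Complex.cpow_natCast, ← Complex.cpow_add _ _ hs0]
    push_cast
    ring_nf
  · have hs0 := norm_pos_iff.2 (Complex.slitPlane_ne_zero hs)
    rw [norm_pow, ← rpow_natCast, ← rpow_add hs0]
    ring_nf

theorem isBigO_F2_sub_sum (hq : ∀ k : ℕ, q ≠ k - 1 / 2) (β : ℝ) (hc : c ∈ Set.Ioo 0 1) (N : ℕ) :
    (fun η : ℝ => F2 q β c η - ((η ^ (q + 3 / 2) : ℝ) : ℂ) * ∑ n ∈ Finset.range N,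
        acoef q β n / ((Real.Gamma (q + 5 / 2 - n) : ℂ) * (η : ℂ) ^ n)) =O[atTop]
      fun η => η ^ (q + 3 / 2 - N) := by
  have hdecay : RapidDecay 1 fun s => f2 q β s * s ^ (-(q + 5 / 2 : ℝ) : ℂ) := by
    simpa only [Complex.ofReal_neg] using
      (rapidDecay_f2 hq β 1).mul (moderateGrowth_cpow_ofReal 1 (-(q + 5 / 2)))
  have hdiff : DifferentiableOn ℂ (fun s => f2 q β s * s ^ (-(q + 5 / 2 : ℝ) : ℂ)) (slitStrip 1) :=
    (differentiableOn_f2 q β).mul (differentiableOn_id.cpow_const fun s hs => hs.1)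
  have hN : ∀ n ∈ Finset.range N, q + 5 / 2 - N ≤ q + 5 / 2 - n := fun n hn =>
    sub_le_sub_left (Nat.cast_le.2 (mem_range.1 hn).le) _
  refine (isBigO_bromwich_sub_sum hdecay hdiff hc (acoef q β) hN
    (isBigO_f2_mul_cpow_sub_sum q β (q + 5 / 2) N)).congr' ?_ (.of_eq (by ext; ring_nf))
  filter_upwards [eventually_gt_atTop 0] with η hη
  rw [F2_eq_bromwich, mul_sum]
  congr 1
  refine sum_congr rfl fun n _ => ?_
  have hpow : η ^ (q + 5 / 2 - n - 1) = η ^ (q + 3 / 2) / η ^ n := by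
    rw [← rpow_sub_natCast hη.ne']
    ring_nf
  rw [hpow, Complex.Gamma_ofReal]
  push_cast
  field_simp

end F2

section ExponentiallySmallSeries

variable {q β η η₀ : ℝ}

lemma max_one_exp_mul {x y : ℝ} (hx : 0 ≤ x) : max 1 (rexp (x * y)) = rexp (x * max 0 y) := by
  rw [mul_max_of_nonneg _ _ hx, mul_zero, exp_monotone.map_max, exp_zero]

lemma norm_Sterm (q β η : ℝ) (m : ℕ) :
    ‖Sterm q β η m‖ = rexp (-(m + 1) * η) * ((m : ℝ) + 1) ^ (-(q + 1)) *
      ‖kummerM (-1 / 2) (-(q : ℂ) - 1 / 2) (-2 * (m + 1) / (β : ℂ))‖ := by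
  rw [Sterm, norm_mul, norm_mul, norm_pow, norm_neg, norm_one, one_pow, one_mul,
    Complex.norm_real, norm_of_nonneg (by positivity), rpow_neg (by positivity), div_eq_mul_inv]

lemma exists_norm_Sterm_le (hq : ∀ k : ℕ, q ≠ k - 1 / 2) (β : ℝ) :
    ∃ (C : ℝ) (K : ℕ), ∀ (η : ℝ) (m : ℕ),
      ‖Sterm q β η m‖ ≤ C * (((m : ℝ) + 1) ^ K * rexp (-(η - max 0 (-2 / β)) * (m + 1))) := by
  obtain ⟨C, K, hM⟩ := hasKummerGrowth_kummerM (a := -1 / 2) (neg_sub_half_ne_neg_natCast hq)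
  have hC : 0 ≤ C := by simpa using (norm_nonneg _).trans (hM 0)
  obtain ⟨L, hL⟩ := exists_nat_ge (-(q + 1))
  refine ⟨C * (1 + |-2 / β|) ^ K, L + K, fun η m => ?_⟩
  have hm : (1 : ℝ) ≤ m + 1 := by simp
  have hz : (-2 * (m + 1) / (β : ℂ)) = (((m + 1) * (-2 / β) : ℝ) : ℂ) := by push_cast; ring
  have hpow : ((m : ℝ) + 1) ^ (-(q + 1)) ≤ ((m : ℝ) + 1) ^ L := by
    rw [← rpow_natCast]
    exact rpow_le_rpow_of_exponent_le hm hL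
  have hnorm : 1 + ‖(((m + 1) * (-2 / β) : ℝ) : ℂ)‖ ≤ (1 + |-2 / β|) * (m + 1) := by
    rw [Complex.norm_real, norm_mul, norm_of_nonneg (by positivity), norm_eq_abs]
    linarith
  have hM' := hM (((m + 1) * (-2 / β) : ℝ) : ℂ)
  rw [Complex.ofReal_re, max_one_exp_mul (by positivity)] at hM'
  rw [norm_Sterm, hz]
  calc _ ≤ rexp (-(m + 1) * η) * ((m : ℝ) + 1) ^ L * (C * ((1 + |-2 / β|) * (m + 1)) ^ K *
        rexp ((m + 1) * max 0 (-2 / β))) := by gcongr; exact hM'.trans (by gcongr)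
    _ = C * (1 + |-2 / β|) ^ K * (((m : ℝ) + 1) ^ (L + K) *
        (rexp (-(m + 1) * η) * rexp ((m + 1) * max 0 (-2 / β)))) := by rw [mul_pow]; ring
    _ = _ := by rw [← exp_add]; ring_nf

lemma summable_norm_Sterm (hq : ∀ k : ℕ, q ≠ k - 1 / 2) (hη : max 0 (-2 / β) < η) :
    Summable fun m => ‖Sterm q β η m‖ := by
  obtain ⟨C, K, hC⟩ := exists_norm_Sterm_le hq β
  have hgeom := (summable_nat_add_iff 1).2 (summable_pow_mul_exp_neg_nat_mul K (sub_pos.2 hη))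
  push_cast at hgeom
  exact .of_nonneg_of_le (fun _ => norm_nonneg _) (hC η) (hgeom.mul_left C)

lemma norm_Sterm_le_of_le (h : η₀ ≤ η) (m : ℕ) :
    ‖Sterm q β η m‖ ≤ ‖Sterm q β η₀ m‖ * rexp (η₀ - η) := by
  have hexp : rexp (-(m + 1) * η) ≤ rexp (-(m + 1) * η₀) * rexp (η₀ - η) := by
    rw [← exp_add]
    gcongr
    nlinarith [mul_nonneg m.cast_nonneg (sub_nonneg.2 h)]
  simp only [norm_Sterm, mul_right_comm _ _ (rexp (η₀ - η))]
  gcongr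

lemma isBigO_Sfun (hq : ∀ k : ℕ, q ≠ k - 1 / 2) (β x : ℝ) :
    Sfun q β =O[atTop] fun η => η ^ x := by
  set η₀ := max 0 (-2 / β) + 1
  have hsum : HasSum _ _ := (summable_norm_Sterm hq (lt_add_one (max 0 (-2 / β)))).hasSum
  have htsum : (fun η => ∑' m, Sterm q β η m) =O[atTop] fun η => rexp (-1 * η) := by
    refine .of_bound ((∑' m, ‖Sterm q β η₀ m‖) * rexp η₀) ?_
    filter_upwards [eventually_ge_atTop η₀] with η hη
    rw [norm_of_nonneg (exp_pos _).le, mul_assoc, ← exp_add, neg_one_mul, ← sub_eq_add_neg]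
    exact tsum_of_norm_bounded (hsum.mul_right _) (norm_Sterm_le_of_le hη)
  exact (htsum.const_mul_left _).trans (isLittleO_exp_neg_mul_rpow_atTop one_pos x).isBigO

end ExponentiallySmallSeries

theorem stmt7_general (q β c : ℝ) (hq : ∀ k : ℕ, q ≠ (k : ℝ) - 1 / 2) (_hβ : β ≠ 0)
    (hc0 : 0 < c) (hc1 : c < 1) :
    (∀ η : ℝ, max 0 (-2 / β) < η → Summable (fun m : ℕ => Sterm q β η m)) ∧
    ∀ N : ℕ,
      (fun η : ℝ => F2 q β c η - Sfun q β η -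
          ((η ^ (q + 3 / 2) : ℝ) : ℂ) * ∑ n ∈ Finset.range N,
            acoef q β n / ((Real.Gamma (q + 5 / 2 - n) : ℂ) * (η : ℂ) ^ n)) =O[atTop]
        (fun η : ℝ => η ^ (q + 3 / 2 - N)) := by
  refine ⟨fun η hη => (summable_norm_Sterm hq hη).of_norm, fun N => ?_⟩
  simpa only [sub_right_comm] using
    (isBigO_F2_sub_sum hq β ⟨hc0, hc1⟩ N).sub (isBigO_Sfun hq β (q + 3 / 2 - N))

theorem stmt7 (q β c : ℝ) (hq : 0 ≤ q) (hhalf : ∀ k : ℕ, q ≠ (k : ℝ) + 1 / 2)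
    (hβ : 0 < β) (hc0 : 0 < c) (hc1 : c < 1) :
    (∀ η : ℝ, 0 < η → Summable (fun m : ℕ => Sterm q β η m)) ∧
    ∀ N : ℕ, 1 ≤ N →
      (fun η : ℝ => F2 q β c η - Sfun q β η -
          ((η ^ (q + 3 / 2) : ℝ) : ℂ) * ∑ n ∈ Finset.range N,
            acoef q β n / ((Real.Gamma (q + 5 / 2 - n) : ℂ) * (η : ℂ) ^ n)) =O[atTop]
        (fun η : ℝ => η ^ (q + 3 / 2 - N)) := by
  have hq' : ∀ k : ℕ, q ≠ (k : ℝ) - 1 / 2 := by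
    rintro (_ | k) h
    · norm_num at h; linarith
    · exact hhalf k (by rw [h]; push_cast; ring)
  have hmax : max 0 (-2 / β) = 0 := max_eq_left (div_nonpos_of_nonpos_of_nonneg (by simp) hβ.le)
  obtain ⟨hS, hF⟩ := stmt7_general q β c hq' hβ.ne' hc0 hc1
  exact ⟨fun η hη => hS η (hmax.trans_lt hη), fun N _ => hF N⟩
end

section
/- Let m ≥ 2 be an integer, β > 0 and η ∈ ℝ. With R_{m,k} = (2/β)^{−k} (k−1)! (3/2 − m + k)_{m−k} / (Γ(m−1/2) (m−k)!) for 1 ≤ k ≤ m, one has Γ(m−1/2) (2/β)^{m−1/2} Σ_{k=1}^m (R_{m,k}/Γ(k)) F_{k−1}(η) = Σ_{j=0}^{m−1} (−1)^j ((−1/2)_j / j!) (2/β)^{j−1/2} F_{m−j−1}(η). -/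
open Real MeasureTheory Set Finset

/-- The coefficients `R_{m,k}`. -/
noncomputable def Rcoef (m k : ℕ) (β : ℝ) : ℝ :=
  (2 / β) ^ (-(k : ℝ)) * (k - 1).factorial *
    (ascPochhammer ℝ (m - k)).eval (3 / 2 - (m : ℝ) + k) /
      (Real.Gamma ((m : ℝ) - 1 / 2) * (m - k).factorial)

/-!
Substitute `j = m - k`. The identity then holds coefficient by coefficient: `Γ(k) = (k - 1)!`, and
the reflection `(1 - j - r)_j = (-1)^j (r)_j` at `r = -1/2` turns `(3/2 - m + k)_{m-k}` into
`(-1)^j (-1/2)_j`.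
-/

theorem ascPochhammer_eval_one_sub_sub {R : Type*} [CommRing R] (n : ℕ) (r : R) :
    (ascPochhammer R n).eval (1 - n - r) = (-1) ^ n * (ascPochhammer R n).eval r := by
  calc (ascPochhammer R n).eval (1 - n - r)
      = (ascPochhammer R n).eval (-r - n + 1) := by ring_nf
    _ = (descPochhammer R n).eval (-r) := (descPochhammer_eval_eq_ascPochhammer R (-r) n).symm
    _ = (-1) ^ n * ((-1) ^ n * (descPochhammer R n).eval (-r)) := by
      rw [← mul_assoc, ← mul_pow, neg_one_mul, neg_neg, one_pow, one_mul]
    _ = (-1) ^ n * (ascPochhammer R n).eval r := by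
      rw [← ascPochhammer_eval_neg_eq_descPochhammer, neg_neg]

theorem Rcoef_div_Gamma {m k : ℕ} (β : ℝ) (hk : 1 ≤ k) (hkm : k ≤ m) :
    Rcoef m k β / Real.Gamma k =
      (-1) ^ (m - k) * ((ascPochhammer ℝ (m - k)).eval (-1 / 2) / (m - k).factorial) *
        (2 / β) ^ (-(k : ℝ)) / Real.Gamma (m - 1 / 2) := by
  have hΓ : Real.Gamma k = (k - 1).factorial := by
    rw [← Real.Gamma_nat_eq_factorial, Nat.cast_pred hk, sub_add_cancel]
  have hreflect : (ascPochhammer ℝ (m - k)).eval (3 / 2 - (m : ℝ) + k) =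
      (-1) ^ (m - k) * (ascPochhammer ℝ (m - k)).eval (-1 / 2) := by
    rw [← ascPochhammer_eval_one_sub_sub, Nat.cast_sub hkm]
    congr 1
    ring
  have hfactorial : ((k - 1).factorial : ℝ) ≠ 0 := by positivity
  rw [Rcoef, hΓ, hreflect]
  field_simp

theorem Gamma_mul_rpow_mul_Rcoef_div_Gamma {m k : ℕ} {β : ℝ} (hβ : 0 < β) (hk : 1 ≤ k)
    (hkm : k ≤ m) :
    Real.Gamma (m - 1 / 2) * (2 / β) ^ ((m : ℝ) - 1 / 2) * (Rcoef m k β / Real.Gamma k) =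
      (-1) ^ (m - k) * ((ascPochhammer ℝ (m - k)).eval (-1 / 2) / (m - k).factorial) *
        (2 / β) ^ (((m - k : ℕ) : ℝ) - 1 / 2) := by
  have hm : (1 : ℝ) ≤ m := by exact_mod_cast hk.trans hkm
  have hΓ : Real.Gamma ((m : ℝ) - 1 / 2) ≠ 0 := (Real.Gamma_pos_of_pos (by linarith)).ne'
  have hpow : (2 / β) ^ (((m - k : ℕ) : ℝ) - 1 / 2) =
      (2 / β) ^ ((m : ℝ) - 1 / 2) * (2 / β) ^ (-(k : ℝ)) := by
    rw [← Real.rpow_add (by positivity), Nat.cast_sub hkm]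
    congr 1
    ring
  rw [Rcoef_div_Gamma β hk hkm, hpow, mul_right_comm, mul_div_cancel₀ _ hΓ]
  ring

theorem stmt8_general (m : ℕ) {β : ℝ} (hβ : 0 < β) (F : ℝ → ℝ) :
    Real.Gamma ((m : ℝ) - 1 / 2) * (2 / β) ^ ((m : ℝ) - 1 / 2) *
        ∑ k ∈ Finset.Icc 1 m, Rcoef m k β / Real.Gamma (k : ℝ) * F ((k : ℝ) - 1) =
      ∑ j ∈ Finset.range m, (-1 : ℝ) ^ j * ((ascPochhammer ℝ j).eval (-1 / 2 : ℝ) / j.factorial) *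
        (2 / β) ^ ((j : ℝ) - 1 / 2) * F ((m : ℝ) - j - 1) := by
  rw [Finset.mul_sum]
  refine Finset.sum_nbij' (m - ·) (m - ·) (by grind) (by grind) (by grind) (by grind) ?_
  intro k hk
  obtain ⟨hk, hkm⟩ := Finset.mem_Icc.mp hk
  have harg : (m : ℝ) - (m - k : ℕ) - 1 = k - 1 := by
    rw [Nat.cast_sub hkm, sub_sub_cancel]
  rw [harg, ← mul_assoc, Gamma_mul_rpow_mul_Rcoef_div_Gamma hβ hk hkm]

theorem stmt8 (m : ℕ) (hm : 2 ≤ m) (β η : ℝ) (hβ : 0 < β) :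
    Real.Gamma ((m : ℝ) - 1 / 2) * (2 / β) ^ ((m : ℝ) - 1 / 2) *
        ∑ k ∈ Finset.Icc 1 m, Rcoef m k β / Real.Gamma (k : ℝ) * Fstd ((k : ℝ) - 1) η =
      ∑ j ∈ Finset.range m, (-1 : ℝ) ^ j * ((ascPochhammer ℝ j).eval (-1 / 2 : ℝ) / j.factorial) *
        (2 / β) ^ ((j : ℝ) - 1 / 2) * Fstd ((m : ℝ) - j - 1) η :=
  stmt8_general m hβ (Fstd · η)
end
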